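/- Klain's theorem: let φ ∈ Val(V) be even (φ(−K) = φ(K) for all K) and simple (φ(K) = 0 for every K ∈ K(V) whose affine hull has dimension strictly less than n = dim V). Then φ is proportional to the Lebesgue measure: there is c ∈ ℂ with φ(K) = c · vol(K) for all K ∈ K(V). -/

import Mathlib

/-!
A compact convex set is allowed to be empty here, and a valuation is a function on all sets of which
only the values on compact convex sets matter; `Good` collects the properties even, simple,
translation invariant and continuous. The core is `Good.zero_of_cube`: a `Good` valuation `Φ` on `ℝⁿ`
which vanishes on the unit cube vanishes. The theorem follows by applying it to `φ - c μ`, with `c`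
chosen so that the difference vanishes on a parallelepiped; that `μ` is itself `Good` is
`good_measure`.

`Good.zero_of_cube` is proved by induction on `n`.

* Cylinders. For a fixed direction, the value of `Φ` on the cylinder of height one over a base is a
  `Good` valuation of the base (`Good.cyl`). By the induction hypothesis, and since the value is an
  additive continuous function of the height (`Good.cyl_zero`), `Φ` vanishes on
  cylinders in a given direction once it vanishes on one parallelepiped with an edge in that
  direction. The unit cube serves for the coordinate directions. For any other direction, the
  invariance under segments in coordinate directions, proved next, reduces the value on a
  parallelepiped to the value on a facet, which is zero.
* Segments. A body `K` is the intersection of the region below it and the region above it, and the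
  union of the two is a cylinder (`Good.split`). Adding to `K` a segment in the direction of the
  cylinder leaves the upper region as it is and lengthens the lower one by a cylinder, so that
  `Φ (K + I) = Φ K` for all segments `I` (`Good.add_seg`), and by continuity for all zonoids `I`.
* Symmetric bodies. Let `h` be the support function of a symmetric body. Its Gaussian smoothing
  `x ↦ E h (ε G x + t x)`, with `G` a Gaussian matrix and `t` a Gaussian scalar, is sublinear, tends
  to `E|t| h (x)` as `ε → 0`, and is a difference of support functions of zonoids
  (`smoothing_cosine`). The last point is where a spherical harmonics argument would be usual; here
  it comes from an explicit kernel whose cosine transform is computed in `gaussian_kernel`. Hence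
  `Φ` takes the same value on a symmetric body as on `{0}`, namely zero (`Good.symm_eq`).
* General bodies. It suffices to treat regions below bodies. Such a region is a limit of bodies
  that arise by cutting a body `A` which fills the lower half of a symmetric cylinder, where the part
  cut off is again of that kind. For such `A`, up to a translation, `A ∪ -A` is the cylinder and
  `A ∩ -A` is symmetric, so `2 Φ A = 0` by evenness (`Good.half_cyl`, `Good.dn_zero`,
  `Good.zero_of_symm`).
-/

open scoped NNReal Pointwise
open Metric MeasureTheory

/-- The singleton convex body `{x}`. -/
def ConvexBody.singletonBody {V : Type*} [NormedAddCommGroup V] [NormedSpace ℝ V] (x : V) :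
    ConvexBody V :=
  ⟨{x}, convex_singleton x, isCompact_singleton, Set.singleton_nonempty x⟩

/-- `φ` satisfies the valuation property: `φ(A ∪ B) = φ(A) + φ(B) - φ(A ∩ B)` whenever
`A`, `B` and `A ∪ B` are convex bodies. -/
def IsValuation {V : Type*} [NormedAddCommGroup V] [NormedSpace ℝ V]
    (φ : ConvexBody V → ℂ) : Prop :=
  ∀ A B C D : ConvexBody V, (C : Set V) = (A : Set V) ∪ (B : Set V) →
    (D : Set V) = (A : Set V) ∩ (B : Set V) → φ C = φ A + φ B - φ D

/-- `φ` is translation invariant. -/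
def IsTranslationInvariant {V : Type*} [NormedAddCommGroup V] [NormedSpace ℝ V]
    (φ : ConvexBody V → ℂ) : Prop :=
  ∀ (K : ConvexBody V) (x : V), φ (K + ConvexBody.singletonBody x) = φ K

/-- `φ ∈ Val(V)`: a translation invariant valuation, continuous in the Hausdorff metric. -/
def MemVal {V : Type*} [NormedAddCommGroup V] [NormedSpace ℝ V]
    (φ : ConvexBody V → ℂ) : Prop :=
  IsValuation φ ∧ IsTranslationInvariant φ ∧ Continuous φ

/-- `φ` is homogeneous of degree `i`: `φ (λ • K) = λ ^ i * φ K` for all `λ ≥ 0`. -/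
def IsHomogeneousVal {V : Type*} [NormedAddCommGroup V] [NormedSpace ℝ V]
    (φ : ConvexBody V → ℂ) (i : ℕ) : Prop :=
  ∀ (c : ℝ≥0) (K : ConvexBody V), φ (c • K) = ((c : ℝ) : ℂ) ^ i * φ K

/-- The reflection `-K` of a convex body. -/
def ConvexBody.negBody {V : Type*} [NormedAddCommGroup V] [NormedSpace ℝ V]
    (K : ConvexBody V) : ConvexBody V :=
  ⟨-(K : Set V), K.convex.neg, K.isCompact.neg, K.nonempty.neg⟩

section
open ProbabilityTheory Filter Topology
set_option linter.unusedSectionVars false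

/-! ### One-dimensional Gaussian integrals -/

lemma integral_gaussian_eq (f : ℝ → ℝ) :
    ∫ x, f x ∂gaussianReal 0 1 = (√(2 * Real.pi))⁻¹ * ∫ x, f x * Real.exp (-x ^ 2 / 2) := by
  rw [integral_gaussianReal_eq_integral_smul one_ne_zero, ← integral_const_mul]
  congr 1; ext x
  simp [gaussianPDFReal]; ring

lemma integrable_abs_pow_gaussian (k : ℕ) : Integrable (fun x : ℝ => |x| ^ k) (gaussianReal 0 1) := by
  have h := (IsGaussian.memLp_id (gaussianReal 0 1) (k : ENNReal) (by simp)).integrable_norm_pow'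
  simpa using h

lemma integrable_abs_pow_mul_exp (k : ℕ) :
    Integrable (fun x : ℝ => |x| ^ k * Real.exp (-x ^ 2 / 2)) := by
  have h := integrable_rpow_mul_exp_neg_mul_sq (b := 1/2) (by norm_num) (s := k) (by
    have : (0:ℝ) ≤ k := by positivity
    linarith)
  refine h.norm.congr (Eventually.of_forall fun x => ?_)
  simp only [Real.rpow_natCast, norm_mul, norm_pow, Real.norm_eq_abs, Real.abs_exp]
  ring_nf

lemma tendsto_abs_pow_mul_exp (k : ℕ) :
    Tendsto (fun x : ℝ => x ^ k * Real.exp (-x ^ 2 / 2)) atTop (𝓝 0) := by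
  have h := Real.tendsto_pow_mul_exp_neg_atTop_nhds_zero k
  refine squeeze_zero' (g := fun x : ℝ => x ^ k * Real.exp (-x)) ?_ ?_ h
  · filter_upwards [eventually_ge_atTop 0] with x hx
    positivity
  · filter_upwards [eventually_ge_atTop 2] with x hx
    have : -x ^ 2 / 2 ≤ -x := by nlinarith
    gcongr

/-- Gaussian integration by parts, for the sine. -/
lemma gaussian_stein_sin (c ρ : ℝ) :
    ∫ x, x * Real.sin (c + ρ * x) ∂gaussianReal 0 1
      = ρ * ∫ x, Real.cos (c + ρ * x) ∂gaussianReal 0 1 := by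
  rw [integral_gaussian_eq, integral_gaussian_eq, mul_left_comm ρ, ← integral_const_mul ρ]
  congr 1
  have hd : ∀ x : ℝ, HasDerivAt (fun x => Real.sin (c + ρ * x) * Real.exp (-x ^ 2 / 2))
      (ρ * (Real.cos (c + ρ * x) * Real.exp (-x ^ 2 / 2))
        - x * Real.sin (c + ρ * x) * Real.exp (-x ^ 2 / 2)) x := by
    intro x
    have h1 : HasDerivAt (fun x : ℝ => c + ρ * x) ρ x := by
      simpa using ((hasDerivAt_id x).const_mul ρ).const_add c
    have h2 : HasDerivAt (fun x : ℝ => -x ^ 2 / 2) (-x) x := by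
      have := ((hasDerivAt_pow 2 x).neg).div_const 2
      exact this.congr_deriv (by norm_num; ring)
    exact (h1.sin.mul h2.exp).congr_deriv (by ring)
  have i0 := integrable_abs_pow_mul_exp 0
  have i1 := integrable_abs_pow_mul_exp 1
  have ia : Integrable (fun x : ℝ => ρ * (Real.cos (c + ρ * x) * Real.exp (-x ^ 2 / 2))) := by
    refine (Integrable.mono' i0 (by fun_prop) (Eventually.of_forall fun x => ?_)).const_mul ρ
    rw [norm_mul, Real.norm_eq_abs, Real.norm_eq_abs, Real.abs_exp, pow_zero]
    gcongr; exact Real.abs_cos_le_one _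
  have ib : Integrable (fun x : ℝ => x * Real.sin (c + ρ * x) * Real.exp (-x ^ 2 / 2)) := by
    refine (Integrable.mono' i1 (by fun_prop) (Eventually.of_forall fun x => ?_))
    rw [norm_mul, norm_mul, Real.norm_eq_abs, Real.norm_eq_abs, Real.norm_eq_abs, Real.abs_exp,
      pow_one]
    gcongr
    exact mul_le_of_le_one_right (abs_nonneg _) (Real.abs_sin_le_one _)
  have ht : Tendsto (fun x : ℝ => Real.sin (c + ρ * x) * Real.exp (-x ^ 2 / 2)) (cocompact ℝ) (𝓝 0) := by
    have h0 : Tendsto (fun x : ℝ => Real.exp (-x ^ 2 / 2)) (cocompact ℝ) (𝓝 0) := by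
      have h1 := tendsto_abs_pow_mul_exp 0
      have h2 := h1.comp (tendsto_norm_cocompact_atTop (E := ℝ))
      refine h2.congr fun x => ?_
      simp [sq_abs]
    refine squeeze_zero_norm (fun x => ?_) h0
    rw [norm_mul, Real.norm_eq_abs, Real.norm_eq_abs, Real.abs_exp]
    exact mul_le_of_le_one_left (Real.exp_pos _).le (Real.abs_sin_le_one _)
  rw [cocompact_eq_atBot_atTop] at ht
  have h := integral_of_hasDerivAt_of_tendsto hd (ia.sub ib)
    (ht.mono_left le_sup_left) (ht.mono_left le_sup_right)
  rw [integral_sub ia ib] at h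
  linarith

lemma gaussian_cexp (c ρ : ℝ) :
    ∫ x : ℝ, Complex.exp (((c + ρ * x : ℝ) : ℂ) * Complex.I) ∂gaussianReal 0 1
      = ((Real.exp (-ρ ^ 2 / 2) : ℝ) : ℂ) * Complex.exp ((c : ℂ) * Complex.I) := by
  have h := charFun_gaussianReal (μ := 0) (v := 1) ρ
  rw [charFun_apply_real] at h
  have : ∀ x : ℝ, Complex.exp (((c + ρ * x : ℝ) : ℂ) * Complex.I)
      = Complex.exp (ρ * x * Complex.I) * Complex.exp ((c : ℂ) * Complex.I) := by
    intro x; rw [← Complex.exp_add]; push_cast; ring_nf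
  simp_rw [this]
  rw [integral_mul_const, h]
  push_cast
  simp [neg_div]

lemma gaussian_cos (c ρ : ℝ) :
    ∫ x : ℝ, Real.cos (c + ρ * x) ∂gaussianReal 0 1 = Real.exp (-ρ ^ 2 / 2) * Real.cos c := by
  have hi : Integrable (fun x : ℝ => Complex.exp (((c + ρ * x : ℝ) : ℂ) * Complex.I))
      (gaussianReal 0 1) := by
    refine (integrable_const (1:ℝ)).mono' (by fun_prop) (Eventually.of_forall fun x => ?_)
    rw [Complex.norm_exp_ofReal_mul_I]
  have h := congrArg Complex.re (gaussian_cexp c ρ)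
  have h2 := integral_re hi
  simp only [Complex.re_ofReal_mul, Complex.exp_ofReal_mul_I_re] at h
  rw [← h]
  simp only [RCLike.re_eq_complex_re, Complex.exp_ofReal_mul_I_re] at h2
  exact h2

lemma gaussian_sin (c ρ : ℝ) :
    ∫ x : ℝ, Real.sin (c + ρ * x) ∂gaussianReal 0 1 = Real.exp (-ρ ^ 2 / 2) * Real.sin c := by
  have hi : Integrable (fun x : ℝ => Complex.exp (((c + ρ * x : ℝ) : ℂ) * Complex.I))
      (gaussianReal 0 1) := by
    refine (integrable_const (1:ℝ)).mono' (by fun_prop) (Eventually.of_forall fun x => ?_)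
    rw [Complex.norm_exp_ofReal_mul_I]
  have h := congrArg Complex.im (gaussian_cexp c ρ)
  have h2 := integral_im hi
  simp only [Complex.im_ofReal_mul, Complex.exp_ofReal_mul_I_im] at h
  rw [← h]
  simp only [RCLike.im_eq_complex_im, Complex.exp_ofReal_mul_I_im] at h2
  exact h2

lemma gaussian_inner (a c ρ : ℝ) :
    ∫ x : ℝ, (a * Real.cos (c + ρ * x) + (c + ρ * x) * Real.sin (c + ρ * x)) ∂gaussianReal 0 1
      = Real.exp (-ρ ^ 2 / 2) * ((a + ρ ^ 2) * Real.cos c + c * Real.sin c) := by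
  have i1 : Integrable (fun x : ℝ => Real.cos (c + ρ * x)) (gaussianReal 0 1) :=
    (integrable_const (1:ℝ)).mono' (by fun_prop)
      (Eventually.of_forall fun x => Real.abs_cos_le_one _)
  have i2 : Integrable (fun x : ℝ => Real.sin (c + ρ * x)) (gaussianReal 0 1) :=
    (integrable_const (1:ℝ)).mono' (by fun_prop)
      (Eventually.of_forall fun x => Real.abs_sin_le_one _)
  have i3 : Integrable (fun x : ℝ => x * Real.sin (c + ρ * x)) (gaussianReal 0 1) := by
    refine (integrable_abs_pow_gaussian 1).mono' (by fun_prop) (Eventually.of_forall fun x => ?_)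
    rw [norm_mul, pow_one]
    exact mul_le_of_le_one_right (abs_nonneg _) (Real.abs_sin_le_one _)
  have i4 : Integrable (fun x : ℝ => c * Real.sin (c + ρ * x) + ρ * (x * Real.sin (c + ρ * x)))
      (gaussianReal 0 1) := (i2.const_mul c).add (i3.const_mul ρ)
  have : ∀ x : ℝ, (a * Real.cos (c + ρ * x) + (c + ρ * x) * Real.sin (c + ρ * x))
      = a * Real.cos (c + ρ * x) + (c * Real.sin (c + ρ * x) + ρ * (x * Real.sin (c + ρ * x))) := by
    intro x; ring
  simp_rw [this]
  rw [integral_add (i1.const_mul a) i4,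
    integral_add (i2.const_mul c) (i3.const_mul ρ), integral_const_mul, integral_const_mul,
    integral_const_mul, gaussian_stein_sin, gaussian_cos, gaussian_sin]
  ring

/-- The integral does not depend on `r`: on the half-line, the integrand times the Gaussian density
is an exact derivative. -/
lemma gaussian_outer (r : ℝ) :
    ∫ x : ℝ, |x| * ((1 - r ^ 2) * Real.cos (r * x) + r * x * Real.sin (r * x)) ∂gaussianReal 0 1
      = 2 * (√(2 * Real.pi))⁻¹ := by
  rw [integral_gaussian_eq, mul_comm (2 : ℝ) (√(2 * Real.pi))⁻¹]
  congr 1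
  have h := integral_comp_abs (f := fun x : ℝ => x * ((1 - r ^ 2) * Real.cos (r * x)
    + r * x * Real.sin (r * x)) * Real.exp (-x ^ 2 / 2))
  have e : ∀ x : ℝ, |x| * ((1 - r ^ 2) * Real.cos (r * |x|)
    + r * |x| * Real.sin (r * |x|)) * Real.exp (-|x| ^ 2 / 2) = |x| * ((1 - r ^ 2) * Real.cos (r * x)
    + r * x * Real.sin (r * x)) * Real.exp (-x ^ 2 / 2) := by
    intro x
    rcases abs_cases x with ⟨h, _⟩ | ⟨h, _⟩ <;> rw [h]
    simp
  simp_rw [e] at h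
  rw [h]
  have hd : ∀ x : ℝ, HasDerivAt (fun x => -((Real.cos (r * x) + r * x * Real.sin (r * x))
      * Real.exp (-x ^ 2 / 2)))
      (x * ((1 - r ^ 2) * Real.cos (r * x)
    + r * x * Real.sin (r * x)) * Real.exp (-x ^ 2 / 2)) x := by
    intro x
    have h1 : HasDerivAt (fun x : ℝ => r * x) r x := by
      simpa using ((hasDerivAt_id x).const_mul r)
    have h2 : HasDerivAt (fun x : ℝ => -x ^ 2 / 2) (-x) x := by
      have := ((hasDerivAt_pow 2 x).neg).div_const 2
      exact this.congr_deriv (by norm_num; ring)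
    exact ((h1.cos.add (h1.mul h1.sin)).mul h2.exp).neg.congr_deriv (by simp; ring)
  have hinteg : Integrable (fun x : ℝ => x * ((1 - r ^ 2) * Real.cos (r * x)
    + r * x * Real.sin (r * x)) * Real.exp (-x ^ 2 / 2)) := by
    have i1 := (integrable_abs_pow_mul_exp 1).const_mul (|1 - r ^ 2|)
    have i2 := (integrable_abs_pow_mul_exp 2).const_mul (|r|)
    refine (i1.add i2).mono' (by fun_prop) (Eventually.of_forall fun x => ?_)
    simp only [norm_mul, Real.norm_eq_abs, Real.abs_exp, pow_one, Pi.add_apply]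
    rw [← mul_assoc, ← mul_assoc, ← add_mul]
    gcongr
    calc |x| * |(1 - r ^ 2) * Real.cos (r * x) + r * x * Real.sin (r * x)|
        ≤ |x| * (|1 - r ^ 2| * 1 + |r| * |x| * 1) := by
          gcongr
          refine (abs_add_le _ _).trans ?_
          rw [abs_mul, abs_mul, abs_mul]
          gcongr
          · exact Real.abs_cos_le_one _
          · exact Real.abs_sin_le_one _
      _ = _ := by ring
  have hlim : Tendsto (fun x => -((Real.cos (r * x) + r * x * Real.sin (r * x))
      * Real.exp (-x ^ 2 / 2))) atTop (𝓝 0) := by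
    have h0 := (tendsto_abs_pow_mul_exp 0).add ((tendsto_abs_pow_mul_exp 1).const_mul |r|)
    simp only [mul_zero, add_zero] at h0
    refine squeeze_zero_norm' ?_ h0
    filter_upwards [eventually_ge_atTop 0] with x hx
    rw [norm_neg, norm_mul, Real.norm_eq_abs, Real.norm_eq_abs, Real.abs_exp, pow_zero, pow_one,
      ← mul_assoc, ← add_mul]
    gcongr
    refine (abs_add_le _ _).trans ?_
    rw [abs_mul, abs_mul, abs_of_nonneg hx]
    exact add_le_add (Real.abs_cos_le_one _)
      (mul_le_of_le_one_right (by positivity) (Real.abs_sin_le_one _))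
  rw [integral_Ioi_of_hasDerivAt_of_tendsto (hd 0).continuousAt.continuousWithinAt
    (fun x _ => hd x) hinteg.integrableOn hlim]
  simp

/-! ### An explicit cosine transform -/

section
variable {E : Type*} [NormedAddCommGroup E] [InnerProductSpace ℝ E] [FiniteDimensional ℝ E]
  [MeasurableSpace E] [BorelSpace E]

lemma stdGaussian_map_inner (w : E) :
    (stdGaussian E).map (fun v => inner ℝ w v) = (gaussianReal 0 1).map (fun t => ‖w‖ * t) := by
  have h := IsGaussian.map_eq_gaussianReal (μ := stdGaussian E) (innerSL ℝ w)
  rw [integral_strongDual_stdGaussian, variance_dual_stdGaussian, innerSL_apply_norm] at h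
  have h2 := gaussianReal_map_const_mul (μ := 0) (v := 1) ‖w‖
  rw [mul_zero, mul_one] at h2
  rw [h2]
  have : (‖w‖ ^ 2).toNNReal = ⟨‖w‖ ^ 2, by positivity⟩ := Real.toNNReal_of_nonneg (by positivity)
  rw [this] at h
  exact h

lemma stdGaussian_map_inner_pair (x w : E) (hxw : inner ℝ x w = 0) :
    (stdGaussian E).map (fun v => (inner ℝ x v, inner ℝ w v))
      = ((gaussianReal 0 1).map (fun t => ‖x‖ * t)).prod
        ((gaussianReal 0 1).map (fun t => ‖w‖ * t)) := by
  have hG : HasGaussianLaw (fun v => ((innerSL ℝ x) v, (innerSL ℝ w) v)) (stdGaussian E) :=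
    (IsGaussian.hasGaussianLaw_id (μ := stdGaussian E)).map_fun
      ((innerSL ℝ x).prod (innerSL ℝ w))
  have hc : cov[fun v => (innerSL ℝ x) v, fun v => (innerSL ℝ w) v; stdGaussian E] = 0 := by
    have h := covarianceBilin_apply_eq_cov (μ := stdGaussian E) (IsGaussian.memLp_two_id) x w
    rw [covarianceBilin_stdGaussian] at h
    exact h.symm.trans hxw
  have hi := hG.indepFun_of_covariance_eq_zero hc
  rw [indepFun_iff_map_prod_eq_prod_map_map (by fun_prop) (by fun_prop)] at hi
  rw [← stdGaussian_map_inner, ← stdGaussian_map_inner]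
  exact hi

lemma abs_kernel_le (a b : ℝ) : |a * Real.cos b + b * Real.sin b| ≤ |a| + |b| := by
  refine (abs_add_le _ _).trans ?_
  rw [abs_mul, abs_mul]
  exact add_le_add (mul_le_of_le_one_right (abs_nonneg _) (Real.abs_cos_le_one _))
    (mul_le_of_le_one_right (abs_nonneg _) (Real.abs_sin_le_one _))

/-- The cosine transform of an explicit kernel, with respect to the Gaussian measure, is a Gaussian
in the component of `z` orthogonal to the unit vector `x`. The proof integrates `v` separately along
`x` (`gaussian_outer`) and along that component (`gaussian_inner`). -/
lemma gaussian_kernel (x z : E) (hx : ‖x‖ = 1) :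
    ∫ v, |inner ℝ x v| * ((1 - ‖z‖ ^ 2) * Real.cos (inner ℝ z v)
        + inner ℝ z v * Real.sin (inner ℝ z v)) ∂(stdGaussian E)
      = 2 * (√(2 * Real.pi))⁻¹ * Real.exp (-(‖z‖ ^ 2 - (inner ℝ z x) ^ 2) / 2) := by
  set r : ℝ := inner ℝ z x with hr
  set w : E := z - r • x with hw
  have hxw : inner ℝ x w = 0 := by
    rw [hw, inner_sub_right, inner_smul_right, real_inner_self_eq_norm_sq, hx, real_inner_comm, ← hr]
    ring
  have hρ : ‖w‖ ^ 2 = ‖z‖ ^ 2 - r ^ 2 := by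
    rw [hw, norm_sub_sq_real, norm_smul, inner_smul_right, ← hr, hx, mul_one, Real.norm_eq_abs,
      sq_abs]
    ring
  have hz : ∀ v, inner ℝ z v = r * inner ℝ x v + inner ℝ w v := by
    intro v
    rw [hw, inner_sub_left, inner_smul_left]; simp
  let F : ℝ × ℝ → ℝ := fun p => |p.1| * ((1 - ‖z‖ ^ 2) * Real.cos (r * p.1 + p.2)
    + (r * p.1 + p.2) * Real.sin (r * p.1 + p.2))
  have hF : Continuous F := by fun_prop
  calc _ = ∫ v, F (inner ℝ x v, inner ℝ w v) ∂(stdGaussian E) := by simp only [hz, F]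
    _ = ∫ p, F p ∂((stdGaussian E).map (fun v => (inner ℝ x v, inner ℝ w v))) := by
        rw [integral_map (by fun_prop) hF.aestronglyMeasurable]
    _ = ∫ p, F (p.1, ‖w‖ * p.2) ∂((gaussianReal 0 1).prod (gaussianReal 0 1)) := by
        rw [stdGaussian_map_inner_pair x w hxw, hx]
        simp only [one_mul, Measure.map_id']
        have hm : (gaussianReal 0 1).prod ((gaussianReal 0 1).map (fun t => ‖w‖ * t))
            = ((gaussianReal 0 1).prod (gaussianReal 0 1)).map (Prod.map id (fun t => ‖w‖ * t)) := by
          rw [← Measure.map_prod_map _ _ measurable_id (by fun_prop), Measure.map_id]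
        rw [hm, integral_map (by fun_prop) hF.aestronglyMeasurable]
        rfl
    _ = ∫ a, ∫ b, F (a, ‖w‖ * b) ∂(gaussianReal 0 1) ∂(gaussianReal 0 1) := by
        refine integral_prod (fun p : ℝ × ℝ => F (p.1, ‖w‖ * p.2)) ?_
        have i1 := integrable_abs_pow_gaussian 1
        have i2 := integrable_abs_pow_gaussian 2
        have i0 := integrable_abs_pow_gaussian 0
        have j := (((i1.const_mul |1 - ‖z‖ ^ 2|).add (i2.const_mul |r|)).mul_prod i0).add
          ((i1.const_mul ‖w‖).mul_prod i1)
        refine j.mono' (by fun_prop) (Eventually.of_forall fun p => ?_)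
        simp only [F, norm_mul, Real.norm_eq_abs, abs_abs, Pi.add_apply, pow_zero, pow_one, mul_one]
        calc _ ≤ |p.1| * (|1 - ‖z‖ ^ 2| + |r * p.1 + ‖w‖ * p.2|) := by
              gcongr; exact abs_kernel_le _ _
          _ ≤ |p.1| * (|1 - ‖z‖ ^ 2| + (|r| * |p.1| + ‖w‖ * |p.2|)) := by
              gcongr
              refine (abs_add_le _ _).trans ?_
              rw [abs_mul, abs_mul, abs_norm]
          _ = _ := by ring
    _ = ∫ a, Real.exp (-‖w‖ ^ 2 / 2) * (|a| * ((1 - r ^ 2) * Real.cos (r * a) + r * a * Real.sin (r * a)))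
          ∂(gaussianReal 0 1) := by
        congr 1; ext a
        simp only [F]
        rw [integral_const_mul, gaussian_inner, hρ]
        ring_nf
    _ = _ := by
        rw [integral_const_mul, gaussian_outer, hρ]; ring

/-- The density of the standard Gaussian measure. -/
lemma exists_stdGaussian_density : ∃ c : ℝ, 0 < c ∧ stdGaussian E =
    (volume : Measure E).withDensity (fun v => ENNReal.ofReal (c * Real.exp (-‖v‖ ^ 2 / 2))) := by
  have hb : (0:ℝ) < (1/2 : ℂ).re := by norm_num
  have hinteg : Integrable (fun v : E => Real.exp (-‖v‖ ^ 2 / 2)) := by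
    have h := (GaussianFourier.integrable_cexp_neg_mul_sq_norm_add (V := E) hb 0 0).norm
    refine h.congr (Eventually.of_forall fun v => ?_)
    simp [Complex.norm_exp]
    norm_cast
    ring_nf
  have hI : ∫ v : E, Real.exp (-‖v‖ ^ 2 / 2) = (2 * Real.pi) ^ (Module.finrank ℝ E / 2 : ℝ) := by
    have h := GaussianFourier.integral_rexp_neg_mul_sq_norm (V := E) (b := 1/2) (by norm_num)
    rw [show Real.pi / (1 / 2) = 2 * Real.pi by ring] at h
    rw [← h]; congr 1; ext v; ring_nf
  set I : ℝ := (2 * Real.pi) ^ (Module.finrank ℝ E / 2 : ℝ) with hIdef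
  have hIpos : 0 < I := by positivity
  refine ⟨I⁻¹, by positivity, ?_⟩
  have hfin : IsFiniteMeasure ((volume : Measure E).withDensity
      (fun v => ENNReal.ofReal (I⁻¹ * Real.exp (-‖v‖ ^ 2 / 2)))) :=
    isFiniteMeasure_withDensity_ofReal (hinteg.const_mul I⁻¹).2
  refine Measure.ext_of_charFun ?_
  ext t
  rw [charFun_stdGaussian, charFun_apply,
    integral_withDensity_eq_integral_toReal_smul (by fun_prop) (by simp)]
  have h := GaussianFourier.integral_cexp_neg_mul_sq_norm_add (V := E) hb Complex.I t
  have e : ∀ v : E, (ENNReal.ofReal (I⁻¹ * Real.exp (-‖v‖ ^ 2 / 2))).toReal •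
      Complex.exp ((inner ℝ v t : ℝ) * Complex.I) =
      (I⁻¹ : ℂ) * Complex.exp (-(1/2) * ‖v‖ ^ 2 + Complex.I * (inner ℝ t v : ℝ)) := by
    intro v
    rw [ENNReal.toReal_ofReal (by positivity), Complex.exp_add, real_inner_comm, Complex.real_smul]
    push_cast
    ring_nf
  simp_rw [e]
  rw [integral_const_mul, h, Complex.I_sq]
  have e2 : ((Real.pi : ℂ) / (1/2)) ^ (Module.finrank ℝ E / 2 : ℂ) = (I : ℂ) := by
    rw [hIdef, Complex.ofReal_cpow (by positivity)]
    push_cast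
    ring_nf
  rw [e2, ← mul_assoc, inv_mul_cancel₀ (by exact_mod_cast hIpos.ne'), one_mul]
  ring_nf
end

/-! ### Gaussian measures on Euclidean space and on matrices -/

section
variable {E : Type*} [NormedAddCommGroup E] [InnerProductSpace ℝ E] [FiniteDimensional ℝ E]
  [MeasurableSpace E] [BorelSpace E]

lemma integrable_exp_neg_sq_norm {b : ℝ} (hb : 0 < b) :
    Integrable (fun v : E => Real.exp (-b * ‖v‖ ^ 2)) := by
  have h := (GaussianFourier.integrable_cexp_neg_mul_sq_norm_add (V := E) (b := (b : ℂ))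
    (by simpa using hb) 0 0).norm
  refine h.congr (Eventually.of_forall fun v => ?_)
  simp [Complex.norm_exp]
  norm_cast
  simp

lemma integrable_pow_mul_exp_stdGaussian (k : ℕ) {κ : ℝ} (hκ : κ < 1) :
    Integrable (fun z : E => ‖z‖ ^ k * Real.exp (κ * ‖z‖ ^ 2 / 2)) (stdGaussian E) := by
  obtain ⟨c, hc, hd⟩ := exists_stdGaussian_density (E := E)
  rw [hd, integrable_withDensity_iff_integrable_smul₀' (by fun_prop) (by simp)]
  set η : ℝ := (1 - κ) / 4 with hη
  have hη0 : 0 < η := by rw [hη]; linarith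
  have h := (integrable_exp_neg_sq_norm (E := E) hη0).const_mul
    (c * (k.factorial * Real.exp (1 / (4 * η))))
  refine h.mono' (by fun_prop) (Eventually.of_forall fun z => ?_)
  rw [ENNReal.toReal_ofReal (by positivity), smul_eq_mul, Real.norm_of_nonneg (by positivity)]
  have h1 : ‖z‖ ^ k ≤ k.factorial * Real.exp ‖z‖ := by
    have := Real.pow_div_factorial_le_exp ‖z‖ (norm_nonneg _) k
    rwa [div_le_iff₀' (by positivity)] at this
  have h2 : ‖z‖ ≤ η * ‖z‖ ^ 2 + 1 / (4 * η) := by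
    have h3 : 1 / (4 * η) * (4 * η) = 1 := by field_simp
    have h4 : 0 ≤ (2 * η * ‖z‖ - 1) ^ 2 := sq_nonneg _
    by_contra hcon
    push Not at hcon
    have := mul_lt_mul_of_pos_right hcon (show 0 < 4 * η by positivity)
    nlinarith
  calc c * Real.exp (-‖z‖ ^ 2 / 2) * (‖z‖ ^ k * Real.exp (κ * ‖z‖ ^ 2 / 2))
      ≤ c * Real.exp (-‖z‖ ^ 2 / 2) * (k.factorial * Real.exp (η * ‖z‖ ^ 2 + 1 / (4 * η))
          * Real.exp (κ * ‖z‖ ^ 2 / 2)) := by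
        gcongr
        refine h1.trans ?_
        gcongr
    _ = c * k.factorial * (Real.exp (-‖z‖ ^ 2 / 2) * Real.exp (η * ‖z‖ ^ 2 + 1 / (4 * η))
          * Real.exp (κ * ‖z‖ ^ 2 / 2)) := by ring
    _ = c * k.factorial * (Real.exp (1 / (4 * η)) * Real.exp (-η * ‖z‖ ^ 2)) := by
        rw [← Real.exp_add, ← Real.exp_add, ← Real.exp_add]
        congr 2
        rw [hη]; ring
    _ = _ := by ring

lemma integrable_pow_stdGaussian (k : ℕ) :
    Integrable (fun z : E => ‖z‖ ^ k) (stdGaussian E) := by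
  simpa using integrable_pow_mul_exp_stdGaussian (E := E) k (κ := 0) (by norm_num)

/-- The Cameron–Martin formula for the standard Gaussian measure. -/
lemma integral_stdGaussian_add (f : E → ℝ) (y : E) :
    ∫ v, f (v + y) ∂(stdGaussian E)
      = ∫ z, f z * Real.exp (inner ℝ z y - ‖y‖ ^ 2 / 2) ∂(stdGaussian E) := by
  obtain ⟨c, hc, hd⟩ := exists_stdGaussian_density (E := E)
  rw [hd, integral_withDensity_eq_integral_toReal_smul (by fun_prop) (by simp),
    integral_withDensity_eq_integral_toReal_smul (by fun_prop) (by simp),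
    ← integral_add_right_eq_self (fun z => (ENNReal.ofReal (c * Real.exp (-‖z‖ ^ 2 / 2))).toReal •
      (f z * Real.exp (inner ℝ z y - ‖y‖ ^ 2 / 2))) y]
  congr 1; ext z
  have h : Real.exp (-‖z‖ ^ 2 / 2)
      = Real.exp (-‖z + y‖ ^ 2 / 2) * Real.exp (inner ℝ (z + y) y - ‖y‖ ^ 2 / 2) := by
    rw [← Real.exp_add, inner_add_left, norm_add_sq_real, real_inner_self_eq_norm_sq]
    congr 1
    ring
  rw [ENNReal.toReal_ofReal (by positivity), ENNReal.toReal_ofReal (by positivity), smul_eq_mul,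
    smul_eq_mul, h]
  ring

lemma gaussian_exp_quadratic (b : ℝ) {q : ℝ} (hq : 0 ≤ q) :
    Integrable (fun t : ℝ => Real.exp (t * b - q * t ^ 2 / 2)) (gaussianReal 0 1) ∧
    ∫ t, Real.exp (t * b - q * t ^ 2 / 2) ∂(gaussianReal 0 1)
      = (√(1 + q))⁻¹ * Real.exp (b ^ 2 / (2 * (1 + q))) := by
  have hp : 0 < 1 + q := by positivity
  have e : ∀ t : ℝ, Real.exp (t * b - q * t ^ 2 / 2) * Real.exp (-t ^ 2 / 2)
      = Real.exp (b ^ 2 / (2 * (1 + q))) * Real.exp (-((1 + q) / 2) * (t - b / (1 + q)) ^ 2) := by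
    intro t
    rw [← Real.exp_add, ← Real.exp_add]
    congr 1
    field_simp
    ring
  constructor
  · rw [gaussianReal_of_var_ne_zero _ one_ne_zero,
      integrable_withDensity_iff_integrable_smul₀' (by fun_prop) (by simp [gaussianPDF])]
    have h := ((integrable_exp_neg_mul_sq (b := (1 + q) / 2) (by positivity)).comp_sub_right
      (b / (1 + q))).const_mul ((√(2 * Real.pi))⁻¹ * Real.exp (b ^ 2 / (2 * (1 + q))))
    refine h.congr (Eventually.of_forall fun t => ?_)
    simp only [mul_assoc]
    rw [← e]
    simp [gaussianPDF, gaussianPDFReal, ENNReal.toReal_ofReal]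
    rw [ENNReal.toReal_ofReal (by positivity)]
    ring
  · rw [integral_gaussian_eq]
    simp_rw [e]
    rw [integral_const_mul, integral_sub_right_eq_self (fun t => Real.exp (-((1 + q) / 2) * t ^ 2)),
      integral_gaussian]
    rw [show Real.pi / ((1 + q) / 2) = (2 * Real.pi) / (1 + q) by field_simp,
      Real.sqrt_div (by positivity)]
    have : √(2 * Real.pi) ≠ 0 := by positivity
    field_simp
end

section
variable {ι : Type*} [Fintype ι]

/-- Square matrices (as tuples of columns) with the Frobenius inner product. -/
abbrev MatSpace (ι : Type*) [Fintype ι] := PiLp 2 (fun _ : ι => EuclideanSpace ℝ ι)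

/-- The matrix `G` applied to the vector `x`. -/
noncomputable def matApply (G : MatSpace ι) (x : EuclideanSpace ℝ ι) : EuclideanSpace ℝ ι :=
  ∑ j, x j • G j

lemma continuous_matApply_left (x : EuclideanSpace ℝ ι) :
    Continuous (fun G : MatSpace ι => matApply G x) := by
  unfold matApply; fun_prop

lemma matApply_add (G : MatSpace ι) (x y : EuclideanSpace ℝ ι) :
    matApply G (x + y) = matApply G x + matApply G y := by
  simp [matApply, add_smul, Finset.sum_add_distrib]

lemma matApply_smul (G : MatSpace ι) (c : ℝ) (x : EuclideanSpace ℝ ι) :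
    matApply G (c • x) = c • matApply G x := by
  simp [matApply, mul_smul, Finset.smul_sum]

/-- A Gaussian matrix applied to `x` is distributed as `‖x‖` times a standard Gaussian vector. -/
lemma map_matApply (x : EuclideanSpace ℝ ι) :
    (stdGaussian (MatSpace ι)).map (fun G => matApply G x)
      = (stdGaussian (EuclideanSpace ℝ ι)).map (fun v => ‖x‖ • v) := by
  have hm : Measurable (fun G : MatSpace ι => matApply G x) := (continuous_matApply_left x).measurable
  have : IsProbabilityMeasure ((stdGaussian (MatSpace ι)).map (fun G => matApply G x)) :=
    Measure.isProbabilityMeasure_map hm.aemeasurable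
  have : IsProbabilityMeasure ((stdGaussian (EuclideanSpace ℝ ι)).map (fun v => ‖x‖ • v)) :=
    Measure.isProbabilityMeasure_map (by fun_prop)
  refine Measure.ext_of_charFun ?_
  ext t
  rw [charFun_apply, charFun_apply, integral_map (by fun_prop) (by fun_prop),
    integral_map (by fun_prop) (by fun_prop)]
  let T : MatSpace ι := WithLp.toLp 2 (fun j => x j • t)
  have h1 : ∀ G : MatSpace ι, inner ℝ (matApply G x) t = inner ℝ G T := by
    intro G
    simp only [matApply, sum_inner, PiLp.inner_apply, T, inner_smul_left, inner_smul_right]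
    simp
  have h2 : ∀ v : EuclideanSpace ℝ ι, inner ℝ (‖x‖ • v) t = inner ℝ v (‖x‖ • t) := by
    intro v; rw [inner_smul_left, inner_smul_right]; simp
  simp_rw [h1, h2]
  rw [← charFun_apply, ← charFun_apply, charFun_stdGaussian, charFun_stdGaussian]
  have h3 : ‖T‖ ^ 2 = ‖‖x‖ • t‖ ^ 2 := by
    rw [norm_smul, norm_norm, mul_pow, PiLp.norm_sq_eq_of_L2, EuclideanSpace.norm_sq_eq x,
      Finset.sum_mul]
    simp [T, norm_smul, mul_pow]
  congr 3
  exact_mod_cast h3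
end

/-! ### Gaussian smoothing of sublinear functions -/

section
variable {E : Type*} [NormedAddCommGroup E] [NormedSpace ℝ E]

/-- Sublinear functions `E → ℝ` (positively homogeneous, subadditive), with the linear growth bound
(automatic in finite dimension) recorded as a field. -/
structure Sublin (h : E → ℝ) : Prop where
  smul : ∀ c : ℝ, 0 ≤ c → ∀ x, h (c • x) = c * h x
  add : ∀ x y, h (x + y) ≤ h x + h y
  bound : ∃ R : ℝ, 0 ≤ R ∧ ∀ x, |h x| ≤ R * ‖x‖

lemma Sublin.zero {h : E → ℝ} (hh : Sublin h) : h 0 = 0 := by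
  simpa using hh.smul 0 le_rfl 0

lemma Sublin.sub_le {h : E → ℝ} (hh : Sublin h) {R : ℝ} (hR : ∀ x, |h x| ≤ R * ‖x‖) (x y : E) :
    |h x - h y| ≤ R * ‖x - y‖ := by
  have h1 := hh.add y (x - y)
  have h2 := hh.add x (y - x)
  rw [add_sub_cancel] at h1 h2
  have h3 := (le_abs_self _).trans (hR (x - y))
  have h4 := (le_abs_self _).trans (hR (y - x))
  rw [norm_sub_rev] at h4
  rw [abs_le]; constructor <;> linarith

lemma Sublin.continuous {h : E → ℝ} (hh : Sublin h) : Continuous h := by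
  obtain ⟨R, hR0, hR⟩ := hh.bound
  have : LipschitzWith ⟨R, hR0⟩ h := LipschitzWith.of_dist_le_mul fun x y => by
    rw [Real.dist_eq, dist_eq_norm]; exact hh.sub_le hR x y
  exact this.continuous
end

section
variable {ι : Type*} [Fintype ι]

lemma norm_matApply_le (G : MatSpace ι) (x : EuclideanSpace ℝ ι) :
    ‖matApply G x‖ ≤ Fintype.card ι * ‖G‖ * ‖x‖ := by
  unfold matApply
  refine (norm_sum_le _ _).trans ?_
  calc ∑ j, ‖x j • G j‖ ≤ ∑ _j : ι, ‖x‖ * ‖G‖ := by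
        refine Finset.sum_le_sum fun j _ => ?_
        rw [norm_smul]
        gcongr
        · exact PiLp.norm_apply_le x j
        · exact PiLp.norm_apply_le G j
    _ = _ := by simp; ring

lemma continuous_matApply : Continuous
    (fun p : MatSpace ι × EuclideanSpace ℝ ι => matApply p.1 p.2) := by
  unfold matApply; fun_prop

/-- The Gaussian smoothing of `h`: the mean of `h (ε G x + t x)` over a Gaussian matrix `G` and a
Gaussian scalar `t`. It is manifestly sublinear when `h` is. -/
noncomputable def smoothing (h : EuclideanSpace ℝ ι → ℝ) (ε : ℝ) (x : EuclideanSpace ℝ ι) : ℝ :=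
  ∫ p : MatSpace ι × ℝ, h (ε • matApply p.1 x + p.2 • x)
    ∂((stdGaussian (MatSpace ι)).prod (gaussianReal 0 1))

lemma integrable_mat : Integrable (fun p : MatSpace ι × ℝ => (Fintype.card ι * ‖p.1‖ : ℝ))
    ((stdGaussian (MatSpace ι)).prod (gaussianReal 0 1)) := by
  have h1 := (integrable_pow_stdGaussian (E := MatSpace ι) 1).const_mul (Fintype.card ι : ℝ)
  simpa using h1.comp_fst (gaussianReal 0 1)

lemma integrable_scal : Integrable (fun p : MatSpace ι × ℝ => |p.2|)
    ((stdGaussian (MatSpace ι)).prod (gaussianReal 0 1)) := by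
  have h1 := (integrable_abs_pow_gaussian 1)
  simpa using h1.comp_snd (stdGaussian (MatSpace ι))

lemma integrable_smoothing {h : EuclideanSpace ℝ ι → ℝ} (hh : Sublin h) (ε : ℝ)
    (x : EuclideanSpace ℝ ι) :
    Integrable (fun p : MatSpace ι × ℝ => h (ε • matApply p.1 x + p.2 • x))
      ((stdGaussian (MatSpace ι)).prod (gaussianReal 0 1)) := by
  obtain ⟨R, hR0, hR⟩ := hh.bound
  have hc : Continuous (fun p : MatSpace ι × ℝ => h (ε • matApply p.1 x + p.2 • x)) := by
    refine hh.continuous.comp ?_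
    have := (continuous_matApply_left x).comp (continuous_fst (X := MatSpace ι) (Y := ℝ))
    exact (this.const_smul ε).add (continuous_snd.smul continuous_const)
  refine (((integrable_mat (ι := ι)).const_mul (R * |ε| * ‖x‖)).add
    ((integrable_scal (ι := ι)).const_mul (R * ‖x‖))).mono' hc.aestronglyMeasurable
    (Eventually.of_forall fun p => ?_)
  refine (hR _).trans ?_
  calc _ ≤ R * (|ε| * (Fintype.card ι * ‖p.1‖ * ‖x‖) + |p.2| * ‖x‖) := by
        gcongr
        refine (norm_add_le _ _).trans ?_
        rw [norm_smul, norm_smul, Real.norm_eq_abs, Real.norm_eq_abs]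
        gcongr
        exact norm_matApply_le _ _
    _ = _ := by simp only [Pi.add_apply]; ring

/-- Up to the positive constant `E|t|`, smoothing is close to the identity on even functions. -/
lemma smoothing_close {h : EuclideanSpace ℝ ι → ℝ} (hh : Sublin h) (heven : ∀ x, h (-x) = h x) :
    ∃ C : ℝ, 0 ≤ C ∧ ∀ ε : ℝ, 0 < ε → ∀ x,
      |smoothing h ε x - (∫ t, |t| ∂(gaussianReal 0 1)) * h x| ≤ ε * C * ‖x‖ := by
  obtain ⟨R, hR0, hR⟩ := hh.bound
  set P := (stdGaussian (MatSpace ι)).prod (gaussianReal 0 1) with hP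
  refine ⟨R * ∫ p, (Fintype.card ι * ‖p.1‖ : ℝ) ∂P, by positivity, fun ε hε x => ?_⟩
  have e1 : (∫ t, |t| ∂(gaussianReal 0 1)) * h x = ∫ p : MatSpace ι × ℝ, |p.2| * h x ∂P := by
    rw [integral_mul_const]
    congr 1
    rw [hP, integral_fun_snd (fun t : ℝ => |t|)]
    simp
  have e2 : ∀ t : ℝ, h (t • x) = |t| * h x := by
    intro t
    rcases le_total 0 t with ht | ht
    · rw [abs_of_nonneg ht, hh.smul t ht]
    · rw [abs_of_nonpos ht, ← hh.smul (-t) (by linarith), neg_smul, heven]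
  rw [e1, smoothing, ← integral_sub (integrable_smoothing hh ε x)
    ((integrable_scal (ι := ι)).mul_const _)]
  have i1 := (integrable_mat (ι := ι)).const_mul (ε * R * ‖x‖)
  have := norm_integral_le_of_norm_le (f := fun p : MatSpace ι × ℝ =>
    h (ε • matApply p.1 x + p.2 • x) - |p.2| * h x) i1 (Eventually.of_forall fun p => by
      rw [← e2, Real.norm_eq_abs]
      refine (hh.sub_le hR _ _).trans ?_
      rw [add_sub_cancel_right, norm_smul, Real.norm_eq_abs, abs_of_pos hε]
      calc _ ≤ R * (ε * (Fintype.card ι * ‖p.1‖ * ‖x‖)) := by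
            gcongr; exact norm_matApply_le _ _
        _ = _ := by ring)
  rw [integral_const_mul] at this
  refine this.trans (le_of_eq ?_)
  ring

lemma smoothing_sublin {h : EuclideanSpace ℝ ι → ℝ} (hh : Sublin h) (heven : ∀ x, h (-x) = h x)
    {ε : ℝ} (hε : 0 < ε) : Sublin (smoothing h ε) where
  smul c hc x := by
    unfold smoothing
    rw [← integral_const_mul]
    congr 1; ext p
    rw [← hh.smul c hc, matApply_smul, smul_add, smul_comm ε, smul_comm p.2]
  add x y := by
    unfold smoothing
    rw [← integral_add (integrable_smoothing hh ε x) (integrable_smoothing hh ε y)]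
    refine integral_mono (integrable_smoothing hh ε _)
      ((integrable_smoothing hh ε x).add (integrable_smoothing hh ε y)) fun p => ?_
    refine le_trans (le_of_eq ?_) (hh.add _ _)
    rw [matApply_add, smul_add, smul_add]
    congr 1; abel
  bound := by
    obtain ⟨R, hR0, hR⟩ := hh.bound
    obtain ⟨C, hC0, hC⟩ := smoothing_close hh heven
    refine ⟨ε * C + (∫ t, |t| ∂(gaussianReal 0 1)) * R, by positivity, fun x => ?_⟩
    have h1 := hC ε hε x
    have h2 : |(∫ t, |t| ∂(gaussianReal 0 1)) * h x| ≤ (∫ t, |t| ∂(gaussianReal 0 1)) * (R * ‖x‖) := by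
      rw [abs_mul, abs_of_nonneg (by positivity : 0 ≤ ∫ t, |t| ∂(gaussianReal 0 1))]
      gcongr
      exact hR x
    have h3 := abs_add_le (smoothing h ε x - (∫ t, |t| ∂(gaussianReal 0 1)) * h x)
      ((∫ t, |t| ∂(gaussianReal 0 1)) * h x)
    rw [sub_add_cancel] at h3
    nlinarith

/-- On the unit sphere the smoothing is an integral transform of `h`: given `t`, the vector
`ε G x + t x` is a translated Gaussian, the Cameron–Martin formula turns the translation into a
density, and the integral over `t` is `gaussian_exp_quadratic`. -/
lemma smoothing_eq {h : EuclideanSpace ℝ ι → ℝ} (hh : Sublin h) {ε : ℝ} (hε : 0 < ε)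
    {x : EuclideanSpace ℝ ι} (hx : ‖x‖ = 1) :
    smoothing h ε x = ε * (√(1 + 1 / ε ^ 2))⁻¹ *
      ∫ z, h z * Real.exp ((1 / (1 + ε ^ 2)) * (inner ℝ z x) ^ 2 / 2)
        ∂(stdGaussian (EuclideanSpace ℝ ι)) := by
  obtain ⟨R, hR0, hR⟩ := hh.bound
  set γ := stdGaussian (EuclideanSpace ℝ ι)
  set N := gaussianReal 0 1
  have hq : (0:ℝ) ≤ 1 / ε ^ 2 := by positivity
  let F : ℝ → EuclideanSpace ℝ ι → ℝ := fun t z =>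
    h z * Real.exp (t * (inner ℝ z x / ε) - 1 / ε ^ 2 * t ^ 2 / 2)
  have hFc : Continuous (fun p : EuclideanSpace ℝ ι × ℝ => F p.2 p.1) := by
    have := hh.continuous
    fun_prop
  have hexp : ∀ z : EuclideanSpace ℝ ι, (inner ℝ z x / ε) ^ 2 / (2 * (1 + 1 / ε ^ 2))
      = (1 / (1 + ε ^ 2)) * (inner ℝ z x) ^ 2 / 2 := by
    intro z; field_simp; ring
  have hFi : ∀ z, ∫ t, F t z ∂N = h z * ((√(1 + 1 / ε ^ 2))⁻¹ *
      Real.exp ((1 / (1 + ε ^ 2)) * (inner ℝ z x) ^ 2 / 2)) := by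
    intro z
    simp only [F]
    rw [integral_const_mul, (gaussian_exp_quadratic (inner ℝ z x / ε) hq).2, hexp]
  have hinteg : Integrable (fun p : EuclideanSpace ℝ ι × ℝ => F p.2 p.1) (γ.prod N) := by
    rw [integrable_prod_iff hFc.aestronglyMeasurable]
    refine ⟨Eventually.of_forall fun z =>
      (gaussian_exp_quadratic (inner ℝ z x / ε) hq).1.const_mul (h z), ?_⟩
    have hκ : 1 / (1 + ε ^ 2) < 1 := by
      rw [div_lt_one (by positivity)]; nlinarith
    have hm := (integrable_pow_mul_exp_stdGaussian (E := EuclideanSpace ℝ ι) 1 hκ).const_mul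
      (R * (√(1 + 1 / ε ^ 2))⁻¹)
    have hc := hh.continuous
    have e : ∀ z, ∫ t, ‖F t z‖ ∂N = |h z| * ((√(1 + 1 / ε ^ 2))⁻¹ *
      Real.exp ((1 / (1 + ε ^ 2)) * (inner ℝ z x) ^ 2 / 2)) := by
      intro z
      simp only [F, norm_mul, Real.norm_eq_abs, Real.abs_exp]
      rw [integral_const_mul, (gaussian_exp_quadratic (inner ℝ z x / ε) hq).2, hexp]
    simp only [e]
    refine hm.mono' (by fun_prop) (Eventually.of_forall fun z => ?_)
    rw [norm_mul, norm_mul, Real.norm_eq_abs, abs_abs, Real.norm_of_nonneg (by positivity),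
      Real.norm_of_nonneg (by positivity)]
    have hzx : inner ℝ z x ^ 2 ≤ ‖z‖ ^ 2 := by
      rw [sq_le_sq, abs_norm]
      have := abs_real_inner_le_norm z x
      rwa [hx, mul_one] at this
    calc _ ≤ (R * ‖z‖) * ((√(1 + 1 / ε ^ 2))⁻¹ * Real.exp ((1 / (1 + ε ^ 2)) * ‖z‖ ^ 2 / 2)) := by
          gcongr ?_ * (_ * Real.exp (_ * ?_ / 2))
          · exact hR z
      _ = _ := by ring
  calc smoothing h ε x
      = ∫ t, ∫ G, h (ε • matApply G x + t • x) ∂(stdGaussian (MatSpace ι)) ∂N :=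
        integral_prod_symm _ (integrable_smoothing hh ε x)
    _ = ∫ t, ε * ∫ z, F t z ∂γ ∂N := by
        congr 1; ext t
        have h1 : ∫ G, h (ε • matApply G x + t • x) ∂(stdGaussian (MatSpace ι))
            = ∫ v, h (ε • v + t • x) ∂((stdGaussian (MatSpace ι)).map (fun G => matApply G x)) := by
          rw [integral_map (continuous_matApply_left x).measurable.aemeasurable]
          have := hh.continuous
          exact (by fun_prop : Continuous fun v => h (ε • v + t • x)).aestronglyMeasurable
        rw [h1, map_matApply, hx]
        simp only [one_smul, Measure.map_id']
        rw [← integral_const_mul]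
        have h2 : ∀ v, h (ε • v + t • x) = ε * h (v + (t / ε) • x) := by
          intro v
          rw [← hh.smul ε hε.le, smul_add, smul_smul, mul_div_cancel₀ _ hε.ne']
        simp_rw [h2]
        rw [integral_const_mul, integral_const_mul, integral_stdGaussian_add]
        congr 2; ext z
        simp only [F]
        rw [inner_smul_right, norm_smul, hx, mul_one, Real.norm_eq_abs, sq_abs]
        congr 2
        field_simp
    _ = ε * ∫ z, ∫ t, F t z ∂N ∂γ := by
        rw [integral_const_mul]
        congr 1
        exact (integral_integral_swap hinteg).symm
    _ = _ := by
        simp_rw [hFi, mul_left_comm (h _)]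
        rw [integral_const_mul]; ring

/-- The smoothing of an even sublinear function is the cosine transform of an integrable signed
density, that is, a difference of support functions of zonoids. Indeed the integral kernel of
`smoothing_eq` is itself a cosine transform, by `gaussian_kernel`. -/
lemma smoothing_cosine {h : EuclideanSpace ℝ ι → ℝ} (hh : Sublin h) (heven : ∀ x, h (-x) = h x)
    {ε : ℝ} (hε : 0 < ε) : ∃ w : EuclideanSpace ℝ ι × EuclideanSpace ℝ ι → ℝ,
      Continuous w ∧ Integrable (fun p => w p * ‖p.2‖)
        ((stdGaussian (EuclideanSpace ℝ ι)).prod (stdGaussian (EuclideanSpace ℝ ι))) ∧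
      ∀ x, smoothing h ε x = ∫ p, |inner ℝ p.2 x| * w p
        ∂((stdGaussian (EuclideanSpace ℝ ι)).prod (stdGaussian (EuclideanSpace ℝ ι))) := by
  obtain ⟨R, hR0, hR⟩ := hh.bound
  have hhc := hh.continuous
  set γ := stdGaussian (EuclideanSpace ℝ ι)
  set κ : ℝ := 1 / (1 + ε ^ 2) with hκdef
  have hκ0 : 0 ≤ κ := by positivity
  have hκ : κ < 1 := by
    rw [hκdef, div_lt_one (by positivity)]; nlinarith
  set K : ℝ := ε * (√(1 + 1 / ε ^ 2))⁻¹ with hK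
  set D : ℝ := 2 * (√(2 * Real.pi))⁻¹ with hD
  have hD0 : 0 < D := by positivity
  let k : EuclideanSpace ℝ ι → EuclideanSpace ℝ ι → ℝ := fun z v =>
    (1 - ‖√κ • z‖ ^ 2) * Real.cos (inner ℝ (√κ • z) v) + inner ℝ (√κ • z) v *
      Real.sin (inner ℝ (√κ • z) v)
  let w : EuclideanSpace ℝ ι × EuclideanSpace ℝ ι → ℝ := fun p =>
    K * D⁻¹ * (h p.1 * Real.exp (κ * ‖p.1‖ ^ 2 / 2)) * k p.1 p.2
  have hwc : Continuous w := by simp only [w, k]; fun_prop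
  have hsq : ∀ z : EuclideanSpace ℝ ι, ‖√κ • z‖ ^ 2 = κ * ‖z‖ ^ 2 := by
    intro z; rw [norm_smul, mul_pow, Real.norm_eq_abs, sq_abs, Real.sq_sqrt hκ0]
  have hwi : Integrable (fun p => w p * ‖p.2‖) (γ.prod γ) := by
    have m1 := integrable_pow_mul_exp_stdGaussian (E := EuclideanSpace ℝ ι) 1 hκ
    have m2 := integrable_pow_mul_exp_stdGaussian (E := EuclideanSpace ℝ ι) 2 hκ
    have m3 := integrable_pow_mul_exp_stdGaussian (E := EuclideanSpace ℝ ι) 3 hκ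
    have n1 := integrable_pow_stdGaussian (E := EuclideanSpace ℝ ι) 1
    have n2 := integrable_pow_stdGaussian (E := EuclideanSpace ℝ ι) 2
    have j := (((m1.add m3).mul_prod n1).add (m2.mul_prod n2)).const_mul (|K * D⁻¹| * R)
    refine j.mono' (by fun_prop) (Eventually.of_forall fun p => ?_)
    have hk : |k p.1 p.2| ≤ 1 + ‖p.1‖ ^ 2 + ‖p.1‖ * ‖p.2‖ := by
      refine (abs_kernel_le _ _).trans ?_
      gcongr
      · rw [hsq, abs_le]
        constructor <;> nlinarith [sq_nonneg ‖p.1‖]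
      · refine (abs_real_inner_le_norm _ _).trans ?_
        gcongr
        rw [norm_smul, Real.norm_eq_abs, abs_of_nonneg (Real.sqrt_nonneg _)]
        refine mul_le_of_le_one_left (norm_nonneg _) ?_
        rw [Real.sqrt_le_one]; exact hκ.le
    simp only [w, norm_mul, Real.norm_eq_abs, Real.abs_exp, abs_norm, Pi.add_apply]
    rw [← abs_mul]
    calc _ ≤ |K * D⁻¹| * ((R * ‖p.1‖) * Real.exp (κ * ‖p.1‖ ^ 2 / 2)) *
          (1 + ‖p.1‖ ^ 2 + ‖p.1‖ * ‖p.2‖) * ‖p.2‖ := by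
          gcongr
          exact hR _
      _ = _ := by ring
  have hwi2 : ∀ x, Integrable (fun p => |inner ℝ p.2 x| * w p) (γ.prod γ) := by
    intro x
    refine (hwi.norm.const_mul ‖x‖).mono' (by fun_prop) (Eventually.of_forall fun p => ?_)
    rw [norm_mul, norm_mul (w p), Real.norm_eq_abs, abs_abs, norm_norm]
    calc _ ≤ (‖p.2‖ * ‖x‖) * ‖w p‖ := by
          gcongr; exact abs_real_inner_le_norm _ _
      _ = _ := by ring
  refine ⟨w, hwc, hwi, fun x => ?_⟩
  -- reduction to unit vectors by homogeneity
  have hunit : ∀ x : EuclideanSpace ℝ ι, ‖x‖ = 1 →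
      smoothing h ε x = ∫ p, |inner ℝ p.2 x| * w p ∂(γ.prod γ) := by
    intro x hx
    rw [smoothing_eq hh hε hx, integral_prod _ (hwi2 x), ← integral_const_mul]
    congr 1; ext z
    have hk := gaussian_kernel x (√κ • z) hx
    have e : ∀ v, |inner ℝ v x| * w (z, v)
        = K * D⁻¹ * (h z * Real.exp (κ * ‖z‖ ^ 2 / 2)) * (|inner ℝ x v| * k z v) := by
      intro v; simp only [w]; rw [real_inner_comm]; ring
    simp_rw [e]
    rw [integral_const_mul, hk, ← hD, hsq, inner_smul_left]
    have e2 : Real.exp (κ * inner ℝ z x ^ 2 / 2) = Real.exp (κ * ‖z‖ ^ 2 / 2) *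
        Real.exp (-(κ * ‖z‖ ^ 2 - ((starRingEnd ℝ) √κ * inner ℝ z x) ^ 2) / 2) := by
      rw [← Real.exp_add]
      congr 1
      simp only [conj_trivial, mul_pow, Real.sq_sqrt hκ0]
      ring
    rw [e2, ← hK]
    field_simp
  rcases eq_or_ne x 0 with rfl | hx0
  · rw [(smoothing_sublin hh heven hε).zero]; simp
  · have hx : ‖‖x‖⁻¹ • x‖ = 1 := by
      rw [norm_smul, norm_inv, norm_norm, inv_mul_cancel₀ (norm_ne_zero_iff.2 hx0)]
    have hxx : x = ‖x‖ • (‖x‖⁻¹ • x) := by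
      rw [smul_smul, mul_inv_cancel₀ (norm_ne_zero_iff.2 hx0), one_smul]
    have h1 := (smoothing_sublin hh heven hε).smul ‖x‖ (norm_nonneg x) (‖x‖⁻¹ • x)
    rw [← hxx, hunit _ hx, ← integral_const_mul] at h1
    rw [h1]
    congr 1; ext p
    rw [inner_smul_right, abs_mul, abs_of_nonneg (by positivity : 0 ≤ ‖x‖⁻¹)]
    have := norm_ne_zero_iff.2 hx0
    field_simp

lemma gaussian_abs_pos : 0 < ∫ t, |t| ∂(gaussianReal 0 1) := by
  have h := gaussian_outer 0
  simp only [ne_eq, OfNat.ofNat_ne_zero, not_false_eq_true, zero_pow, sub_zero, zero_mul,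
    Real.cos_zero, mul_one, Real.sin_zero, mul_zero, add_zero] at h
  rw [h]; positivity
end

/-! ### Even simple valuations, support functions and symmetric bodies -/

/-- Compact convex sets, the empty set included. -/
def CConv {E : Type*} [NormedAddCommGroup E] [NormedSpace ℝ E] (A : Set E) : Prop :=
  Convex ℝ A ∧ IsCompact A

/-- Even simple translation invariant continuous valuations, as functions on all sets of which
only the values on compact convex sets matter. Simplicity is phrased through hyperplanes, and
continuity through mutual inclusion in `δ`-neighbourhoods. -/
structure Good {E : Type*} [NormedAddCommGroup E] [NormedSpace ℝ E] (Φ : Set E → ℂ) : Prop where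
  empty : Φ ∅ = 0
  val : ∀ A B, CConv A → CConv B → Convex ℝ (A ∪ B) → Φ (A ∪ B) + Φ (A ∩ B) = Φ A + Φ B
  trans : ∀ A, CConv A → ∀ x, Φ ((fun y => x + y) '' A) = Φ A
  even : ∀ A, CConv A → Φ (-A) = Φ A
  simple : ∀ A, CConv A → ∀ f : E →ₗ[ℝ] ℝ, f ≠ 0 → ∀ c : ℝ, (∀ x ∈ A, f x = c) → Φ A = 0
  cont : ∀ A, CConv A → A.Nonempty → ∀ ε : ℝ, 0 < ε → ∃ δ : ℝ, 0 < δ ∧ ∀ B, CConv B → B.Nonempty →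
    (∀ b ∈ B, ∃ a ∈ A, ‖b - a‖ ≤ δ) → (∀ a ∈ A, ∃ b ∈ B, ‖a - b‖ ≤ δ) → ‖Φ B - Φ A‖ < ε

section
variable {E : Type*} [NormedAddCommGroup E] [InnerProductSpace ℝ E]

/-- The convex body with support function `h`. -/
def body (h : E → ℝ) : Set E := {y | ∀ x, inner ℝ y x ≤ h x}

lemma Sublin.add' {g h : E → ℝ} (hg : Sublin g) (hh : Sublin h) : Sublin (g + h) where
  smul c hc x := by simp [hg.smul c hc, hh.smul c hc]; ring
  add x y := by
    have h1 := hg.add x y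
    have h2 := hh.add x y
    simp only [Pi.add_apply]; linarith
  bound := by
    obtain ⟨R, hR0, hR⟩ := hg.bound
    obtain ⟨Q, hQ0, hQ⟩ := hh.bound
    refine ⟨R + Q, by positivity, fun x => ?_⟩
    refine (abs_add_le _ _).trans ?_
    rw [add_mul]; exact add_le_add (hR x) (hQ x)

lemma Sublin.zero' : Sublin (0 : E → ℝ) :=
  ⟨by simp, by simp, 0, le_rfl, by simp⟩

lemma sublin_abs_inner (v : E) : Sublin (fun x : E => |inner ℝ v x|) where
  smul c hc x := by rw [inner_smul_right, abs_mul, abs_of_nonneg hc]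
  add x y := by rw [inner_add_right]; exact abs_add_le _ _
  bound := ⟨‖v‖, norm_nonneg _, fun x => by rw [abs_abs]; exact abs_real_inner_le_norm v x⟩

lemma sublin_norm {δ : ℝ} (hδ : 0 ≤ δ) : Sublin (fun x : E => δ * ‖x‖) where
  smul c hc x := by rw [norm_smul, Real.norm_of_nonneg hc]; ring
  add x y := by rw [← mul_add]; gcongr; exact norm_add_le _ _
  bound := ⟨δ, hδ, fun x => by rw [abs_of_nonneg (by positivity)]⟩

variable [FiniteDimensional ℝ E]

lemma body_cconv {h : E → ℝ} (hh : Sublin h) : CConv (body h) := by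
  constructor
  · intro y hy z hz a b ha hb hab x
    rw [inner_add_left, inner_smul_left, inner_smul_left]
    have h1 := mul_le_mul_of_nonneg_left (hy x) ha
    have h2 := mul_le_mul_of_nonneg_left (hz x) hb
    simp only [conj_trivial]
    calc _ ≤ a * h x + b * h x := add_le_add h1 h2
      _ = h x := by rw [← add_mul, hab, one_mul]
  · obtain ⟨R, hR0, hR⟩ := hh.bound
    refine Metric.isCompact_of_isClosed_isBounded ?_ ?_
    · have : body h = ⋂ x, {y | inner ℝ y x ≤ h x} := by ext; simp [body]
      rw [this]
      exact isClosed_iInter fun x => isClosed_le (by fun_prop) continuous_const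
    · refine (Metric.isBounded_closedBall (x := (0:E)) (r := R)).subset fun y hy => ?_
      rw [mem_closedBall_zero_iff]
      have h1 := (hy y).trans ((le_abs_self _).trans (hR y))
      rw [real_inner_self_eq_norm_sq, sq] at h1
      rcases eq_or_lt_of_le (norm_nonneg y) with h0 | h0
      · rw [← h0]; exact hR0
      · exact le_of_mul_le_mul_right h1 h0

/-- By the Hahn–Banach theorem, a sublinear function `h` is the support function of `body h`. -/
lemma exists_mem_body_inner_eq {h : E → ℝ} (hh : Sublin h) (x : E) :
    ∃ y ∈ body h, inner ℝ y x = h x := by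
  have key : ∀ x : E, x ≠ 0 → ∃ y ∈ body h, inner ℝ y x = h x := by
    intro x hx
    obtain ⟨g, hg1, hg2⟩ := exists_extension_of_le_sublinear (LinearPMap.mkSpanSingleton x (h x) hx) h
      (fun c hc x => hh.smul c hc.le x) hh.add (by
        rintro ⟨z, hz⟩
        obtain ⟨t, rfl⟩ := Submodule.mem_span_singleton.1 hz
        rw [LinearPMap.mkSpanSingleton'_apply]
        simp only [smul_eq_mul, RingHom.id_apply]
        rcases le_total 0 t with ht | ht
        · rw [hh.smul t ht]
        · have h1 := hh.add (t • x) ((-t) • x)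
          rw [hh.smul (-t) (by linarith), neg_smul, add_neg_cancel, hh.zero] at h1
          linarith)
    refine ⟨(InnerProductSpace.toDual ℝ E).symm (LinearMap.toContinuousLinearMap g), ?_, ?_⟩
    · intro z
      rw [InnerProductSpace.toDual_symm_apply]; exact hg2 z
    · rw [InnerProductSpace.toDual_symm_apply]
      have := hg1 ⟨x, Submodule.mem_span_singleton_self x⟩
      simp only [LinearMap.coe_toContinuousLinearMap']
      rw [this]
      exact LinearPMap.mkSpanSingleton_apply ℝ ℝ hx (h x)
  rcases eq_or_ne x 0 with rfl | hx
  · rcases subsingleton_or_nontrivial E with hE | hE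
    · refine ⟨0, fun x => ?_, ?_⟩
      · rw [Subsingleton.elim x 0, hh.zero]; simp
      · rw [hh.zero]; simp
    · obtain ⟨z, hz⟩ := exists_ne (0 : E)
      obtain ⟨y, hy, -⟩ := key z hz
      exact ⟨y, hy, by rw [hh.zero]; simp⟩
  · exact key x hx

lemma body_nonempty {h : E → ℝ} (hh : Sublin h) : (body h).Nonempty :=
  let ⟨y, hy, _⟩ := exists_mem_body_inner_eq hh 0
  ⟨y, hy⟩

lemma exists_inner_sep {A : Set E} (hA : CConv A) {y : E} (hy : y ∉ A) :
    ∃ x : E, ∀ a ∈ A, inner ℝ a x < inner ℝ y x := by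
  obtain ⟨f, u, h1, h2⟩ := geometric_hahn_banach_closed_point hA.1 hA.2.isClosed hy
  refine ⟨(InnerProductSpace.toDual ℝ E).symm f, fun a ha => ?_⟩
  rw [real_inner_comm, real_inner_comm _ y, InnerProductSpace.toDual_symm_apply,
    InnerProductSpace.toDual_symm_apply]
  exact (h1 a ha).trans h2

lemma CConv.add {A B : Set E} (hA : CConv A) (hB : CConv B) : CConv (A + B) :=
  ⟨hA.1.add hB.1, hA.2.add hB.2⟩

lemma body_add {g h : E → ℝ} (hg : Sublin g) (hh : Sublin h) :
    body (g + h) = body g + body h := by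
  apply Set.Subset.antisymm
  · intro y hy
    by_contra hcon
    obtain ⟨x, hx⟩ := exists_inner_sep ((body_cconv hg).add (body_cconv hh)) hcon
    obtain ⟨a, ha, ha'⟩ := exists_mem_body_inner_eq hg x
    obtain ⟨b, hb, hb'⟩ := exists_mem_body_inner_eq hh x
    have h1 := hx _ (Set.add_mem_add ha hb)
    have h2 := hy x
    rw [inner_add_left, ha', hb'] at h1
    simp only [Pi.add_apply] at h2
    linarith
  · rintro _ ⟨a, ha, b, hb, rfl⟩ x
    simp only [inner_add_left, Pi.add_apply]
    exact add_le_add (ha x) (hb x)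

/-- Bodies with uniformly close support functions are close in the Hausdorff distance. -/
lemma body_close {g h : E → ℝ} (hg : Sublin g) {δ : ℝ} (hδ : 0 ≤ δ)
    (hc : ∀ x, |h x - g x| ≤ δ * ‖x‖) : ∀ y ∈ body h, ∃ a ∈ body g, ‖y - a‖ ≤ δ := by
  intro y hy
  have h1 : y ∈ body (g + fun x => δ * ‖x‖) := by
    intro x
    have h2 := hy x
    have h3 := (le_abs_self _).trans (hc x)
    simp only [Pi.add_apply]; linarith
  rw [body_add hg (sublin_norm hδ)] at h1
  obtain ⟨a, ha, b, hb, rfl⟩ := h1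
  refine ⟨a, ha, ?_⟩
  rw [add_sub_cancel_left]
  have h1 := hb b
  rw [real_inner_self_eq_norm_sq, sq] at h1
  rcases eq_or_lt_of_le (norm_nonneg b) with h0 | h0
  · rw [← h0]; exact hδ
  · exact le_of_mul_le_mul_right h1 h0

/-- The support function of a set. -/
noncomputable def suppFun (S : Set E) (x : E) : ℝ := sSup ((fun y => inner ℝ y x) '' S)

lemma le_suppFun {S : Set E} (hS : CConv S) {y : E} (hy : y ∈ S) (x : E) :
    inner ℝ y x ≤ suppFun S x :=
  le_csSup ((hS.2.image (by fun_prop)).bddAbove) (Set.mem_image_of_mem _ hy)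

lemma suppFun_le {S : Set E} (hS : S.Nonempty) {x : E} {c : ℝ} (h : ∀ y ∈ S, inner ℝ y x ≤ c) :
    suppFun S x ≤ c := by
  refine csSup_le (hS.image _) ?_
  rintro _ ⟨y, hy, rfl⟩
  exact h y hy

lemma suppFun_sublin {S : Set E} (hS : CConv S) (hne : S.Nonempty) : Sublin (suppFun S) where
  smul c hc x := by
    rcases eq_or_lt_of_le hc with rfl | hc
    · obtain ⟨y, hy⟩ := hne
      rw [zero_smul, zero_mul]
      apply le_antisymm
      · exact suppFun_le ⟨y, hy⟩ (by simp)
      · simpa using le_suppFun hS hy 0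
    · apply le_antisymm
      · refine suppFun_le hne fun y hy => ?_
        rw [inner_smul_right]
        exact mul_le_mul_of_nonneg_left (le_suppFun hS hy x) hc.le
      · rw [← le_div_iff₀' hc]
        refine suppFun_le hne fun y hy => ?_
        rw [le_div_iff₀' hc, ← inner_smul_right]
        exact le_suppFun hS hy _
  add x y := by
    refine suppFun_le hne fun z hz => ?_
    rw [inner_add_right]
    exact add_le_add (le_suppFun hS hz x) (le_suppFun hS hz y)
  bound := by
    obtain ⟨R, hR⟩ := hS.2.isBounded.exists_norm_le
    obtain ⟨y, hy⟩ := hne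
    refine ⟨R, (norm_nonneg y).trans (hR y hy), fun x => abs_le.2 ⟨?_, ?_⟩⟩
    · refine le_trans ?_ (le_suppFun hS hy x)
      have h1 := abs_le.1 (abs_real_inner_le_norm y x)
      have h2 := mul_le_mul_of_nonneg_right (hR y hy) (norm_nonneg x)
      linarith
    · refine suppFun_le ⟨y, hy⟩ fun z hz => ?_
      exact (real_inner_le_norm z x).trans (mul_le_mul_of_nonneg_right (hR z hz) (norm_nonneg x))

lemma body_suppFun {S : Set E} (hS : CConv S) (hne : S.Nonempty) : body (suppFun S) = S := by
  apply Set.Subset.antisymm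
  · intro y hy
    by_contra hcon
    obtain ⟨x, hx⟩ := exists_inner_sep hS hcon
    obtain ⟨a, ha, ha'⟩ := hS.2.exists_isMaxOn hne
      (by fun_prop : Continuous fun y => inner ℝ y x).continuousOn
    have h1 : suppFun S x ≤ inner ℝ a x := suppFun_le hne fun z hz => ha' hz
    exact absurd ((hy x).trans h1) (not_le.2 (hx a ha))
  · intro y hy x
    exact le_suppFun hS hy x

lemma suppFun_even {S : Set E} (hne : S.Nonempty) (hS : CConv S) (hsymm : -S = S) (x : E) :
    suppFun S (-x) = suppFun S x := by
  have : ∀ x, suppFun S (-x) ≤ suppFun S x := by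
    intro x
    refine suppFun_le hne fun y hy => ?_
    rw [inner_neg_right, ← inner_neg_left]
    refine le_suppFun hS ?_ x
    rw [← hsymm]; simpa using hy
  apply le_antisymm (this x)
  simpa using this (-x)

/-- The segment from `-v` to `v`. -/
def symSeg (v : E) : Set E := (fun t : ℝ => t • v) '' Set.Icc (-1) 1

lemma symSeg_cconv (v : E) : CConv (symSeg v) := by
  constructor
  · exact (convex_Icc (-1 : ℝ) 1).linear_image ((LinearMap.id (R := ℝ) (M := ℝ)).smulRight v)
  · exact isCompact_Icc.image (by fun_prop)

lemma body_abs_inner (v : E) : body (fun x => |inner ℝ v x|) = symSeg v := by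
  apply Set.Subset.antisymm
  · intro y hy
    by_contra hcon
    obtain ⟨x, hx⟩ := exists_inner_sep (symSeg_cconv v) hcon
    have h1 := hx _ (Set.mem_image_of_mem _ (show (1:ℝ) ∈ Set.Icc (-1) 1 by norm_num))
    have h2 := hx _ (Set.mem_image_of_mem _ (show (-1:ℝ) ∈ Set.Icc (-1) 1 by norm_num))
    have h3 := hy x
    simp only [one_smul, neg_smul, inner_neg_left] at h1 h2 h3
    rcases abs_cases (inner ℝ v x) with h | h <;> linarith
  · rintro _ ⟨t, ht, rfl⟩ x
    simp only [inner_smul_left, conj_trivial]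
    refine (le_abs_self _).trans ?_
    rw [abs_mul]
    exact mul_le_of_le_one_left (abs_nonneg _) (abs_le.2 ht)

/-- The sublinear functions `g` whose addition leaves the value of `Φ` on `body h` unchanged, for
every sublinear `h`. -/
def Neutral (Φ : Set E → ℂ) (g : E → ℝ) : Prop :=
  Sublin g ∧ ∀ h, Sublin h → Φ (body (h + g)) = Φ (body h)

lemma Neutral.add {Φ : Set E → ℂ} {f g : E → ℝ} (hf : Neutral Φ f) (hg : Neutral Φ g) :
    Neutral Φ (f + g) :=
  ⟨hf.1.add' hg.1, fun h hh => by rw [← add_assoc, hg.2 _ (hh.add' hf.1), hf.2 h hh]⟩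

lemma Neutral.zero (Φ : Set E → ℂ) : Neutral Φ (0 : E → ℝ) :=
  ⟨Sublin.zero', fun h _ => by rw [add_zero]⟩

lemma Neutral.sum {Φ : Set E → ℂ} {α : Type*} (s : Finset α) (f : α → E → ℝ)
    (hf : ∀ i ∈ s, Neutral Φ (f i)) : Neutral Φ (∑ i ∈ s, f i) :=
  Finset.sum_induction f (Neutral Φ) (fun _ _ => Neutral.add) (Neutral.zero Φ) hf

lemma Neutral.abs_inner {Φ : Set E → ℂ} (hseg : ∀ L, CConv L → ∀ v, Φ (L + symSeg v) = Φ L) (v : E) :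
    Neutral Φ (fun x => |inner ℝ v x|) :=
  ⟨sublin_abs_inner v, fun h hh => by
    rw [body_add hh (sublin_abs_inner v), body_abs_inner, hseg _ (body_cconv hh)]⟩

/-- Continuity of `Φ` in terms of support functions. -/
lemma Good.eq_of_approx {Φ : Set E → ℂ} (hΦ : Good Φ) {h : E → ℝ} (hh : Sublin h) {c : ℂ}
    (H : ∀ δ : ℝ, 0 < δ → ∃ g, Sublin g ∧ (∀ x, |g x - h x| ≤ δ * ‖x‖) ∧ Φ (body g) = c) :
    Φ (body h) = c := by
  by_contra hne
  obtain ⟨δ, hδ, hd⟩ := hΦ.cont _ (body_cconv hh) (body_nonempty hh) ‖c - Φ (body h)‖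
    (norm_pos_iff.2 (sub_ne_zero.2 (Ne.symm hne)))
  obtain ⟨g, hg, hgh, hgc⟩ := H δ hδ
  have := hd _ (body_cconv hg) (body_nonempty hg) (body_close hh hδ.le hgh)
    (body_close hg hδ.le fun x => by rw [abs_sub_comm]; exact hgh x)
  rw [hgc] at this
  exact lt_irrefl _ this

lemma Neutral.of_approx {Φ : Set E → ℂ} (hΦ : Good Φ) {g : E → ℝ} (hg : Sublin g)
    (H : ∀ δ : ℝ, 0 < δ → ∃ f, Neutral Φ f ∧ ∀ x, |f x - g x| ≤ δ * ‖x‖) : Neutral Φ g := by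
  refine ⟨hg, fun h hh => hΦ.eq_of_approx (hh.add' hg) fun δ hδ => ?_⟩
  obtain ⟨f, hf, hfg⟩ := H δ hδ
  refine ⟨h + f, hh.add' hf.1, fun x => ?_, hf.2 h hh⟩
  simpa using hfg x

lemma sublin_integral {Ω : Type*} [MeasurableSpace Ω] {ν : Measure Ω} {V : Ω → E}
    (hV : Integrable V ν) : Sublin (fun x => ∫ ω, |inner ℝ (V ω) x| ∂ν) where
  smul c hc x := by
    rw [← integral_const_mul]
    congr 1; ext ω
    rw [inner_smul_right, abs_mul, abs_of_nonneg hc]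
  add x y := by
    have h1 : ∀ x, Integrable (fun ω => |inner ℝ (V ω) x|) ν := fun x => (hV.inner_const x).abs
    rw [← integral_add (h1 x) (h1 y)]
    refine integral_mono (h1 _) ((h1 x).add (h1 y)) fun ω => ?_
    simp only [inner_add_right]
    exact abs_add_le _ _
  bound := by
    refine ⟨∫ ω, ‖V ω‖ ∂ν, by positivity, fun x => ?_⟩
    rw [← integral_mul_const]
    rw [← Real.norm_eq_abs]
    refine norm_integral_le_of_norm_le (hV.norm.mul_const _) (Eventually.of_forall fun ω => ?_)
    rw [Real.norm_eq_abs, abs_abs]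
    exact abs_real_inner_le_norm _ _

/-- Support functions of zonoids are limits of sums of segments. -/
lemma Neutral.integral [MeasurableSpace E] [BorelSpace E] {Φ : Set E → ℂ} (hΦ : Good Φ)
    (hseg : ∀ L, CConv L → ∀ v, Φ (L + symSeg v) = Φ L)
    {Ω : Type*} [MeasurableSpace Ω] {ν : Measure Ω} {V : Ω → E} (hV : Integrable V ν) :
    Neutral Φ (fun x => ∫ ω, |inner ℝ (V ω) x| ∂ν) := by
  refine Neutral.of_approx hΦ (sublin_integral hV) fun δ hδ => ?_
  obtain ⟨f, hf1, hf2⟩ := (memLp_one_iff_integrable.2 hV).exists_simpleFunc_eLpNorm_sub_lt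
    ENNReal.one_ne_top (ε := ENNReal.ofReal δ) (by simpa using hδ)
  have hfi : Integrable f ν := memLp_one_iff_integrable.1 hf2
  refine ⟨fun x => ∫ ω, |inner ℝ (f ω) x| ∂ν, ?_, fun x => ?_⟩
  · have e : (fun x => ∫ ω, |inner ℝ (f ω) x| ∂ν)
        = ∑ v ∈ f.range, fun x => |inner ℝ (ν.real (f ⁻¹' {v}) • v) x| := by
      ext x
      have h1 := SimpleFunc.map_integral f (fun v => |inner ℝ v x|) hfi (by simp)
      have h2 : Integrable (f.map (fun v => |inner ℝ v x|)) ν := by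
        have := (hfi.inner_const x (𝕜 := ℝ)).abs
        exact this
      rw [SimpleFunc.integral_eq_integral _ h2] at h1
      refine h1.trans ?_
      rw [Finset.sum_apply]
      refine Finset.sum_congr rfl fun v _ => ?_
      rw [inner_smul_left, abs_mul, conj_trivial, abs_of_nonneg measureReal_nonneg, smul_eq_mul]
    rw [e]
    exact Neutral.sum _ _ fun v _ => Neutral.abs_inner hseg _
  · rw [← integral_sub ((hfi.inner_const x).abs) ((hV.inner_const x).abs)]
    have h3 : ∫ ω, ‖V ω - f ω‖ ∂ν ≤ δ := by
      rw [eLpNorm_one_eq_lintegral_enorm] at hf1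
      have h4 := integral_norm_eq_lintegral_enorm (hV.sub hfi).1
      simp only [Pi.sub_apply] at h4
      rw [h4]
      exact ENNReal.toReal_le_of_le_ofReal hδ.le hf1.le
    rw [← Real.norm_eq_abs]
    calc _ ≤ ∫ ω, ‖V ω - f ω‖ * ‖x‖ ∂ν := by
          refine norm_integral_le_of_norm_le ((hV.sub hfi).norm.mul_const _)
            (Eventually.of_forall fun ω => ?_)
          rw [Real.norm_eq_abs]
          refine (abs_abs_sub_abs_le_abs_sub _ _).trans ?_
          rw [← inner_sub_left]
          refine (abs_real_inner_le_norm _ _).trans ?_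
          rw [norm_sub_rev]
      _ ≤ _ := by
          rw [integral_mul_const]; gcongr
end

section
variable {ι : Type*} [Fintype ι]

/-- A valuation that is unchanged by adding segments is constant on symmetric bodies: a symmetric
body is a limit of bodies whose support functions are differences of zonoid support functions. -/
lemma Good.symm_eq {Φ : Set (EuclideanSpace ℝ ι) → ℂ} (hΦ : Good Φ)
    (hseg : ∀ L, CConv L → ∀ v, Φ (L + symSeg v) = Φ L)
    {S : Set (EuclideanSpace ℝ ι)} (hS : CConv S) (hne : S.Nonempty) (hsymm : -S = S) :
    Φ S = Φ (body 0) := by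
  set c := ∫ t, |t| ∂(gaussianReal 0 1) with hcdef
  have hc : 0 < c := gaussian_abs_pos
  let h : EuclideanSpace ℝ ι → ℝ := fun x => c⁻¹ * suppFun S x
  have hs := suppFun_sublin hS hne
  have hh : Sublin h := by
    obtain ⟨R, hR0, hR⟩ := hs.bound
    refine ⟨fun a ha x => ?_, fun x y => ?_, c⁻¹ * R, by positivity, fun x => ?_⟩
    · simp only [h]; rw [hs.smul a ha]; ring
    · simp only [h]; rw [← mul_add]; gcongr; exact hs.add x y
    · simp only [h]; rw [abs_mul, abs_of_pos (inv_pos.2 hc), mul_assoc]; gcongr; exact hR x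
  have heven : ∀ x, h (-x) = h x := fun x => by
    simp only [h]; rw [suppFun_even hne hS hsymm]
  obtain ⟨C, hC0, hC⟩ := smoothing_close hh heven
  rw [← body_suppFun hS hne]
  refine hΦ.eq_of_approx hs fun δ hδ => ?_
  set ε := δ / (C + 1) with hε
  have hε0 : 0 < ε := by positivity
  refine ⟨smoothing h ε, smoothing_sublin hh heven hε0, fun x => ?_, ?_⟩
  · have h1 := hC ε hε0 x
    have h2 : c * h x = suppFun S x := by simp only [h]; field_simp
    rw [← hcdef, h2] at h1
    refine h1.trans ?_
    gcongr
    rw [hε, div_mul_eq_mul_div, div_le_iff₀ (by positivity)]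
    nlinarith
  · obtain ⟨w, hwc, hwi, hw⟩ := smoothing_cosine hh heven hε0
    set ν := (stdGaussian (EuclideanSpace ℝ ι)).prod (stdGaussian (EuclideanSpace ℝ ι))
    have hp : Integrable (fun p : EuclideanSpace ℝ ι × EuclideanSpace ℝ ι => max (w p) 0 • p.2) ν := by
      refine hwi.norm.mono' (by fun_prop) (Eventually.of_forall fun p => ?_)
      rw [norm_smul, norm_mul, norm_norm]
      gcongr
      rw [Real.norm_of_nonneg (le_max_right _ _)]
      exact max_le (le_abs_self _) (abs_nonneg _)
    have hm : Integrable (fun p : EuclideanSpace ℝ ι × EuclideanSpace ℝ ι => max (-w p) 0 • p.2) ν := by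
      refine hwi.norm.mono' (by fun_prop) (Eventually.of_forall fun p => ?_)
      rw [norm_smul, norm_mul, norm_norm]
      gcongr
      rw [Real.norm_of_nonneg (le_max_right _ _)]
      exact max_le (neg_le_abs _) (abs_nonneg _)
    have na := Neutral.integral hΦ hseg hp
    have nb := Neutral.integral hΦ hseg hm
    have e : smoothing h ε + (fun x => ∫ p, |inner ℝ (max (-w p) 0 • p.2) x| ∂ν)
        = 0 + fun x => ∫ p, |inner ℝ (max (w p) 0 • p.2) x| ∂ν := by
      ext x
      simp only [Pi.add_apply, Pi.zero_apply, zero_add]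
      have i1 : Integrable (fun p => |inner ℝ (max (w p) 0 • p.2) x|) ν := (hp.inner_const x).abs
      have i2 : Integrable (fun p => |inner ℝ (max (-w p) 0 • p.2) x|) ν := (hm.inner_const x).abs
      rw [hw x, ← eq_sub_iff_add_eq, ← integral_sub i1 i2]
      congr 1; ext p
      rw [inner_smul_left, inner_smul_left, conj_trivial, conj_trivial, abs_mul, abs_mul,
        abs_of_nonneg (le_max_right (w p) 0), abs_of_nonneg (le_max_right (-w p) 0), ← sub_mul, mul_comm]
      congr 1
      rcases le_total 0 (w p) with h0 | h0
      · rw [max_eq_left h0, max_eq_right (by linarith)]; ring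
      · rw [max_eq_right h0, max_eq_left (by linarith)]; ring
    rw [← nb.2 _ (smoothing_sublin hh heven hε0), e, na.2 _ Sublin.zero']
end

/-! ### Cylinders and regions below a body -/

section
variable {E F : Type*} [NormedAddCommGroup E] [NormedSpace ℝ E]
  [NormedAddCommGroup F] [NormedSpace ℝ F]

lemma CConv.image {A : Set E} (hA : CConv A) (f : E →L[ℝ] F) : CConv (f '' A) :=
  ⟨hA.1.linear_image f.toLinearMap, hA.2.image f.continuous⟩

lemma CConv.imageE {A : Set E} (hA : CConv A) (e : E ≃L[ℝ] F) : CConv (e '' A) :=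
  hA.image (e : E →L[ℝ] F)

lemma CConv.neg {A : Set E} (hA : CConv A) : CConv (-A) := ⟨hA.1.neg, hA.2.neg⟩

lemma CConv.inter {A B : Set E} (hA : CConv A) (hB : CConv B) : CConv (A ∩ B) :=
  ⟨hA.1.inter hB.1, hA.2.inter hB.2⟩

lemma CConv.prod {A : Set E} {B : Set F} (hA : CConv A) (hB : CConv B) : CConv (A ×ˢ B) :=
  ⟨hA.1.prod hB.1, hA.2.prod hB.2⟩

lemma cconv_Icc (c d : ℝ) : CConv (Set.Icc c d) := ⟨convex_Icc c d, isCompact_Icc⟩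

lemma CConv.trans {A : Set E} (hA : CConv A) (x : E) : CConv ((fun y => x + y) '' A) :=
  ⟨hA.1.translate x, hA.2.image (by fun_prop)⟩

/-- Transport along a linear isomorphism. -/
lemma Good.comp_equiv {Φ : Set F → ℂ} (hΦ : Good Φ) (e : E ≃L[ℝ] F) :
    Good (fun A : Set E => Φ (e '' A)) where
  empty := by simp [hΦ.empty]
  val A B hA hB hAB := by
    have h1 := hΦ.val (e '' A) (e '' B) (hA.imageE e) (hB.imageE e)
      (by rw [← Set.image_union]; exact hAB.linear_image e.toLinearMap)
    rwa [← Set.image_union, ← Set.image_inter e.injective] at h1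
  trans A hA x := by
    have h1 := hΦ.trans (e '' A) (hA.imageE e) (e x)
    rw [← h1, Set.image_image, Set.image_image]
    simp
  even A hA := by
    have h1 := hΦ.even (e '' A) (hA.imageE e)
    rw [← h1, Set.image_neg]
  simple A hA f hf c hc := by
    refine hΦ.simple (e '' A) (hA.imageE e) (f ∘ₗ e.symm.toLinearMap) ?_ c ?_
    · intro h0
      apply hf
      ext x
      have := LinearMap.congr_fun h0 (e x)
      simpa using this
    · rintro _ ⟨x, hx, rfl⟩
      simpa using hc x hx
  cont A hA hne ε hε := by
    obtain ⟨δ, hδ, h⟩ := hΦ.cont (e '' A) (hA.imageE e) (hne.image _) ε hε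
    have hC : 0 < ‖(e : E →L[ℝ] F)‖ + 1 := by positivity
    have key : ∀ a b : E, ‖a - b‖ ≤ δ / (‖(e : E →L[ℝ] F)‖ + 1) → ‖e a - e b‖ ≤ δ := by
      intro a b hab
      rw [← map_sub]
      refine ((e : E →L[ℝ] F).le_opNorm (a - b)).trans ?_
      rw [le_div_iff₀ hC] at hab
      nlinarith [norm_nonneg (a - b)]
    refine ⟨δ / (‖(e : E →L[ℝ] F)‖ + 1), by positivity, fun B hB hBne h1 h2 => ?_⟩
    apply h (e '' B) (hB.imageE e) (hBne.image _)
    · rintro _ ⟨b, hb, rfl⟩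
      obtain ⟨a, ha, hab⟩ := h1 b hb
      exact ⟨e a, ⟨a, ha, rfl⟩, key _ _ hab⟩
    · rintro _ ⟨b, hb, rfl⟩
      obtain ⟨a, ha, hab⟩ := h2 b hb
      exact ⟨e a, ⟨a, ha, rfl⟩, key _ _ hab⟩

end

section
variable {W : Type*} [NormedAddCommGroup W] [NormedSpace ℝ W]

/-- Cutting along a horizontal hyperplane. -/
lemma Good.cut {Φ : Set (W × ℝ) → ℂ} (hΦ : Good Φ) {A : Set (W × ℝ)} (hA : CConv A) (k : ℝ) :
    Φ A = Φ (A ∩ {x | x.2 ≤ k}) + Φ (A ∩ {x | k ≤ x.2}) := by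
  have hc1 : CConv (A ∩ {x : W × ℝ | x.2 ≤ k}) :=
    ⟨hA.1.inter (convex_halfSpace_le (LinearMap.snd ℝ W ℝ).isLinear k),
      hA.2.inter_right (isClosed_le continuous_snd continuous_const)⟩
  have hc2 : CConv (A ∩ {x : W × ℝ | k ≤ x.2}) :=
    ⟨hA.1.inter (convex_halfSpace_ge (LinearMap.snd ℝ W ℝ).isLinear k),
      hA.2.inter_right (isClosed_le continuous_const continuous_snd)⟩
  have hu : (A ∩ {x : W × ℝ | x.2 ≤ k}) ∪ (A ∩ {x : W × ℝ | k ≤ x.2}) = A := by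
    rw [← Set.inter_union_distrib_left]
    apply Set.inter_eq_left.2
    intro x _
    exact le_total x.2 k
  have h1 := hΦ.val _ _ hc1 hc2 (by rw [hu]; exact hA.1)
  rw [hu] at h1
  have h2 := hΦ.simple _ (hc1.inter hc2) (LinearMap.snd ℝ W ℝ)
    (fun h => by have := LinearMap.congr_fun h (0, 1); simp at this) k
    (fun x hx => le_antisymm hx.1.2 hx.2.2)
  rw [h2, add_zero] at h1
  exact h1

lemma image_add_prod (B : Set W) (c d s : ℝ) :
    (fun y : W × ℝ => ((0 : W), s) + y) '' (B ×ˢ Set.Icc c d) = B ×ˢ Set.Icc (s + c) (s + d) := by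
  ext ⟨y, t⟩
  simp only [Set.mem_image, Set.mem_prod, Set.mem_Icc, Prod.exists, Prod.mk_add_mk, zero_add,
    Prod.mk.injEq]
  constructor
  · rintro ⟨a, b, ⟨h1, h2, h3⟩, rfl, rfl⟩
    exact ⟨h1, by linarith, by linarith⟩
  · rintro ⟨h1, h2, h3⟩
    exact ⟨y, t - s, ⟨h1, by linarith, by linarith⟩, rfl, by ring⟩

/-- Unit cylinders over sets in the base define an even simple valuation on the base. -/
lemma Good.cyl {Φ : Set (W × ℝ) → ℂ} (hΦ : Good Φ) :
    Good (fun B : Set W => Φ (B ×ˢ Set.Icc (0 : ℝ) 1)) where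
  empty := by simp [hΦ.empty]
  val A B hA hB hAB := by
    have h1 := hΦ.val _ _ (hA.prod (cconv_Icc 0 1)) (hB.prod (cconv_Icc 0 1))
      (by rw [← Set.union_prod]; exact hAB.prod (convex_Icc 0 1))
    rwa [← Set.union_prod, ← Set.inter_prod] at h1
  trans A hA x := by
    have h1 := hΦ.trans _ (hA.prod (cconv_Icc 0 1)) (x, 0)
    rw [← h1]
    congr 1
    ext ⟨y, t⟩
    simp only [Set.mem_image, Set.mem_prod, Prod.exists, Prod.mk_add_mk, zero_add, Prod.mk.injEq]
    constructor
    · rintro ⟨⟨a, ha, rfl⟩, ht⟩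
      exact ⟨a, t, ⟨ha, ht⟩, rfl, rfl⟩
    · rintro ⟨a, b, ⟨h1, h2⟩, rfl, rfl⟩
      exact ⟨⟨a, h1, rfl⟩, h2⟩
  even A hA := by
    have h1 := hΦ.even _ (hA.prod (cconv_Icc 0 1))
    rw [← h1, ← hΦ.trans _ (hA.prod (cconv_Icc 0 1)).neg (0, 1)]
    congr 1
    ext ⟨y, t⟩
    simp only [Set.mem_image, Set.mem_prod, Prod.exists, Prod.mk_add_mk, zero_add, Prod.mk.injEq,
      Set.mem_neg, Prod.neg_mk, Set.mem_Icc]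
    constructor
    · rintro ⟨ha, h1, h2⟩
      exact ⟨y, t - 1, ⟨ha, by linarith, by linarith⟩, rfl, by ring⟩
    · rintro ⟨a, b, ⟨h1, h2, h3⟩, rfl, rfl⟩
      exact ⟨h1, by linarith, by linarith⟩
  simple A hA f hf c hc := by
    refine hΦ.simple _ (hA.prod (cconv_Icc 0 1)) (f ∘ₗ LinearMap.fst ℝ W ℝ) ?_ c ?_
    · intro h0
      apply hf
      ext x
      have := LinearMap.congr_fun h0 (x, 0)
      simpa using this
    · rintro ⟨x, t⟩ ⟨hx, _⟩
      exact hc x hx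
  cont A hA hne ε hε := by
    obtain ⟨δ, hδ, h⟩ := hΦ.cont _ (hA.prod (cconv_Icc 0 1))
      (hne.prod (Set.nonempty_Icc.2 zero_le_one)) ε hε
    refine ⟨δ, hδ, fun B hB hBne h1 h2 => ?_⟩
    apply h _ (hB.prod (cconv_Icc 0 1)) (hBne.prod (Set.nonempty_Icc.2 zero_le_one))
    · rintro ⟨b, t⟩ ⟨hb, ht⟩
      obtain ⟨a, ha, hab⟩ := h1 b hb
      exact ⟨(a, t), ⟨ha, ht⟩, by
        rw [Prod.norm_def]; simpa [hδ.le] using hab⟩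
    · rintro ⟨b, t⟩ ⟨hb, ht⟩
      obtain ⟨a, ha, hab⟩ := h2 b hb
      exact ⟨(a, t), ⟨ha, ht⟩, by
        rw [Prod.norm_def]; simpa [hδ.le] using hab⟩

/-- If all cylinders of height `1` are annihilated, so are those of any height: the value is an
additive continuous function of the height. -/
lemma Good.cyl_zero {Φ : Set (W × ℝ) → ℂ} (hΦ : Good Φ) {B : Set W} (hB : CConv B)
    (h1 : Φ (B ×ˢ Set.Icc (0 : ℝ) 1) = 0) (c d : ℝ) : Φ (B ×ˢ Set.Icc c d) = 0 := by
  have hadd : ∀ s t : ℝ, 0 ≤ s → 0 ≤ t → Φ (B ×ˢ Set.Icc (0 : ℝ) (s + t)) =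
      Φ (B ×ˢ Set.Icc (0 : ℝ) s) + Φ (B ×ˢ Set.Icc (0 : ℝ) t) := by
    intro s t hs ht
    rw [hΦ.cut (hB.prod (cconv_Icc 0 (s + t))) s, ← hΦ.trans _ (hB.prod (cconv_Icc 0 t)) (0, s),
      image_add_prod]
    congr 2
    · ext ⟨y, r⟩
      simp only [Set.mem_inter_iff, Set.mem_prod, Set.mem_Icc, Set.mem_ofPred_eq]
      constructor
      · rintro ⟨⟨h1, h2, h3⟩, h4⟩; exact ⟨h1, h2, h4⟩
      · rintro ⟨h1, h2, h3⟩; exact ⟨⟨h1, h2, by linarith⟩, h3⟩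
    · ext ⟨y, r⟩
      simp only [Set.mem_inter_iff, Set.mem_prod, Set.mem_Icc, Set.mem_ofPred_eq]
      constructor
      · rintro ⟨⟨h1, h2, h3⟩, h4⟩; exact ⟨h1, by linarith, h3⟩
      · rintro ⟨h1, h2, h3⟩; exact ⟨⟨h1, by linarith, by linarith⟩, by linarith⟩
  rcases B.eq_empty_or_nonempty with rfl | hne
  · simp [hΦ.empty]
  have h0 : Φ (B ×ˢ Set.Icc (0 : ℝ) 0) = 0 := by
    have := hadd 0 0 le_rfl le_rfl
    simpa using this
  have hmul : ∀ (k : ℕ) (s : ℝ), 0 ≤ s →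
      Φ (B ×ˢ Set.Icc (0 : ℝ) (k * s)) = k * Φ (B ×ˢ Set.Icc (0 : ℝ) s) := by
    intro k s hs
    induction k with
    | zero => simpa using h0
    | succ k ih =>
      push_cast
      rw [add_mul, one_mul, hadd _ _ (by positivity) hs, ih]; ring
  have hrat : ∀ p q : ℕ, 0 < q → Φ (B ×ˢ Set.Icc (0 : ℝ) (p * (1 / q))) = 0 := by
    intro p q hq
    have h2 := hmul q (1 / q) (by positivity)
    have hq' : (q : ℝ) ≠ 0 := by positivity
    rw [mul_one_div_cancel hq', h1] at h2
    have h3 : Φ (B ×ˢ Set.Icc (0 : ℝ) (1 / q)) = 0 := by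
      have : (q : ℂ) ≠ 0 := by exact_mod_cast hq.ne'
      rcases mul_eq_zero.1 h2.symm with h | h
      · exact absurd h this
      · exact h
    rw [hmul p _ (by positivity), h3, mul_zero]
  have hpos : ∀ t : ℝ, 0 ≤ t → Φ (B ×ˢ Set.Icc (0 : ℝ) t) = 0 := by
    intro t ht
    by_contra hcon
    obtain ⟨δ, hδ, h⟩ := hΦ.cont _ (hB.prod (cconv_Icc 0 t))
      (hne.prod (Set.nonempty_Icc.2 ht)) _ (norm_pos_iff.2 hcon)
    obtain ⟨n, hn⟩ := exists_nat_one_div_lt hδ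
    have hq : (0 : ℝ) < (n + 1 : ℕ) := by positivity
    set p := ⌊t * (n + 1 : ℕ)⌋₊ with hp
    have hp1 : (p : ℝ) * (1 / (n + 1 : ℕ)) ≤ t := by
      rw [mul_one_div, div_le_iff₀ hq]
      exact Nat.floor_le (by positivity)
    have hp2 : t ≤ (p : ℝ) * (1 / (n + 1 : ℕ)) + δ := by
      have h2 := (Nat.lt_floor_add_one (t * (n + 1 : ℕ))).le
      rw [← le_div_iff₀ hq, add_div, ← hp] at h2
      rw [mul_one_div]
      have h3 : (1 : ℝ) / (n + 1 : ℕ) < δ := by push_cast; exact hn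
      linarith
    have hp0 : 0 ≤ (p : ℝ) * (1 / (n + 1 : ℕ)) := by positivity
    have h2 := h _ (hB.prod (cconv_Icc 0 (p * (1 / (n + 1 : ℕ)))))
      (hne.prod (Set.nonempty_Icc.2 hp0)) ?_ ?_
    · rw [hrat p (n + 1) (Nat.succ_pos n), zero_sub, norm_neg] at h2
      exact lt_irrefl _ h2
    · rintro ⟨b, s⟩ ⟨hb, hs1, hs2⟩
      exact ⟨(b, s), ⟨hb, hs1, hs2.trans hp1⟩, by simpa using hδ.le⟩
    · rintro ⟨b, s⟩ ⟨hb, hs1, hs2⟩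
      refine ⟨(b, min s (p * (1 / (n + 1 : ℕ)))), ⟨hb, le_min hs1 hp0, min_le_right _ _⟩, ?_⟩
      simp only [Prod.norm_def, Prod.mk_sub_mk, sub_self, norm_zero, sup_le_iff]
      refine ⟨hδ.le, ?_⟩
      dsimp only at hs1 hs2
      rw [Real.norm_eq_abs, abs_le]
      rcases min_cases s ((p : ℝ) * (1 / (n + 1 : ℕ))) with ⟨h, _⟩ | ⟨h, _⟩ <;> rw [h] <;>
        constructor <;> linarith
  rcases le_or_gt c d with hcd | hcd
  · have h2 := hpos (d - c) (by linarith)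
    rw [← hΦ.trans _ (hB.prod (cconv_Icc _ _)) (0, c), image_add_prod] at h2
    simpa using h2
  · rw [Set.Icc_eq_empty (not_le.2 hcd), Set.prod_empty, hΦ.empty]

/-- The part above height `p` of the region below `K`. -/
def Dn (p : ℝ) (K : Set (W × ℝ)) : Set (W × ℝ) :=
  {x | p ≤ x.2 ∧ ∃ s, x.2 ≤ s ∧ (x.1, s) ∈ K}

lemma Dn_cconv {K : Set (W × ℝ)} (hK : CConv K) (p : ℝ) : CConv (Dn p K) := by
  have hrep : Dn p K = (fun z : (W × ℝ) × ℝ => (z.1.1, z.2)) ''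
      {z | z.1 ∈ K ∧ p ≤ z.2 ∧ z.2 ≤ z.1.2} := by
    ext ⟨y, s⟩
    simp only [Dn, Set.mem_ofPred_eq, Set.mem_image, Prod.exists, Prod.mk.injEq]
    constructor
    · rintro ⟨h1, r, h2, h3⟩
      exact ⟨y, r, s, ⟨h3, h1, h2⟩, rfl, rfl⟩
    · rintro ⟨a, r, b, ⟨h1, h2, h3⟩, rfl, rfl⟩
      exact ⟨h2, r, h3, h1⟩
  constructor
  · rintro ⟨y, s⟩ ⟨h1, r, h2, h3⟩ ⟨y', s'⟩ ⟨h1', r', h2', h3'⟩ a b ha hb hab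
    refine ⟨?_, a * r + b * r', ?_, hK.1 h3 h3' ha hb hab⟩
    · simp only [Prod.snd_add, Prod.smul_snd, smul_eq_mul] at *
      calc p = a * p + b * p := by rw [← add_mul, hab, one_mul]
        _ ≤ _ := by gcongr
    · simp only [Prod.snd_add, Prod.smul_snd, smul_eq_mul] at *
      gcongr
  · rw [hrep]
    refine IsCompact.image ?_ (by fun_prop)
    obtain ⟨b, hb⟩ := (hK.2.image continuous_snd).bddAbove
    have : {z : (W × ℝ) × ℝ | z.1 ∈ K ∧ p ≤ z.2 ∧ z.2 ≤ z.1.2} =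
        (K ×ˢ Set.Icc p b) ∩ {z : (W × ℝ) × ℝ | z.2 ≤ z.1.2} := by
      ext z
      simp only [Set.mem_ofPred_eq, Set.mem_inter_iff, Set.mem_prod, Set.mem_Icc]
      constructor
      · rintro ⟨h1, h2, h3⟩
        exact ⟨⟨h1, h2, h3.trans (hb ⟨_, h1, rfl⟩)⟩, h3⟩
      · rintro ⟨⟨h1, h2, h3⟩, h4⟩; exact ⟨h1, h2, h4⟩
    rw [this]
    exact (hK.2.prod isCompact_Icc).inter_right (isClosed_le (by fun_prop) (by fun_prop))

/-- If cylinders are annihilated, the value on `K` splits into the values on the region below it and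
on the reflected region above it: these regions meet in `K`, and their union is a cylinder. -/
lemma Good.split {Φ : Set (W × ℝ) → ℂ} (hΦ : Good Φ)
    (hcyl : ∀ B : Set W, CConv B → ∀ c d : ℝ, Φ (B ×ˢ Set.Icc c d) = 0)
    {K : Set (W × ℝ)} (hK : CConv K) {p q : ℝ} (hp : ∀ x ∈ K, p ≤ x.2) (hq : ∀ x ∈ K, x.2 ≤ q) :
    Φ K = Φ (Dn p K) + Φ (Dn (-q) (-K)) := by
  have hA := Dn_cconv hK p
  have hB := Dn_cconv hK.neg (-q)
  have hmem : ∀ y s, (y, s) ∈ -(Dn (-q) (-K)) ↔ s ≤ q ∧ ∃ r, r ≤ s ∧ (y, r) ∈ K := by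
    intro y s
    simp only [Dn, Set.mem_neg, Set.mem_ofPred_eq, Prod.neg_mk, neg_neg, neg_le_neg_iff]
    constructor
    · rintro ⟨h1, r, h2, h3⟩; exact ⟨h1, -r, by linarith, h3⟩
    · rintro ⟨h1, r, h2, h3⟩; exact ⟨h1, -r, by linarith, by simpa using h3⟩
  have hu : Dn p K ∪ -(Dn (-q) (-K)) = (Prod.fst '' K) ×ˢ Set.Icc p q := by
    ext ⟨y, s⟩
    rw [Set.mem_union, hmem]
    simp only [Dn, Set.mem_ofPred_eq, Set.mem_prod, Set.mem_image, Prod.exists, exists_and_right,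
      exists_eq_right, Set.mem_Icc]
    constructor
    · rintro (⟨h1, r, h2, h3⟩ | ⟨h1, r, h2, h3⟩)
      · exact ⟨⟨r, h3⟩, h1, h2.trans (hq _ h3)⟩
      · exact ⟨⟨r, h3⟩, (hp _ h3).trans h2, h1⟩
    · rintro ⟨⟨r, h3⟩, h1, h2⟩
      rcases le_total s r with h | h
      · exact Or.inl ⟨h1, r, h, h3⟩
      · exact Or.inr ⟨h2, r, h, h3⟩
  have hi : Dn p K ∩ -(Dn (-q) (-K)) = K := by
    ext ⟨y, s⟩
    rw [Set.mem_inter_iff, hmem]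
    simp only [Dn, Set.mem_ofPred_eq]
    constructor
    · rintro ⟨⟨h1, r, h2, h3⟩, ⟨h4, r', h5, h6⟩⟩
      have hs : Convex ℝ {t : ℝ | (y, t) ∈ K} := by
        intro t ht t' ht' a b ha hb hab
        have := hK.1 ht ht' ha hb hab
        simpa [← add_smul, hab] using this
      exact hs.ordConnected.out h6 h3 ⟨h5, h2⟩
    · intro h
      exact ⟨⟨hp _ h, s, le_rfl, h⟩, ⟨hq _ h, s, le_rfl, h⟩⟩
  have hfst : CConv (Prod.fst '' K) := hK.image (ContinuousLinearMap.fst ℝ W ℝ)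
  have h1 := hΦ.val _ _ hA hB.neg (by rw [hu]; exact (hfst.prod (cconv_Icc p q)).1)
  rw [hu, hi, hcyl _ hfst, zero_add, hΦ.even _ hB] at h1
  exact h1

lemma exists_height_bounds {K : Set (W × ℝ)} (hK : CConv K) :
    ∃ p q : ℝ, (∀ x ∈ K, p ≤ x.2) ∧ ∀ x ∈ K, x.2 ≤ q := by
  obtain ⟨p, hp⟩ := (hK.2.image continuous_snd).bddBelow
  obtain ⟨q, hq⟩ := (hK.2.image continuous_snd).bddAbove
  exact ⟨p, q, fun x hx => hp ⟨x, hx, rfl⟩, fun x hx => hq ⟨x, hx, rfl⟩⟩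

/-- If cylinders are annihilated, adding a vertical segment does not change the value. -/
lemma Good.add_seg {Φ : Set (W × ℝ) → ℂ} (hΦ : Good Φ)
    (hcyl : ∀ B : Set W, CConv B → ∀ c d : ℝ, Φ (B ×ˢ Set.Icc c d) = 0)
    {L : Set (W × ℝ)} (hL : CConv L) {t : ℝ} (ht : 0 ≤ t) :
    Φ (L + {(0 : W)} ×ˢ Set.Icc 0 t) = Φ L := by
  obtain ⟨p, q, hp, hq⟩ := exists_height_bounds hL
  have h0 : CConv ({(0 : W)} : Set W) := ⟨convex_singleton _, isCompact_singleton⟩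
  have hLt : CConv (L + {(0 : W)} ×ˢ Set.Icc 0 t) :=
    ⟨hL.1.add (h0.prod (cconv_Icc 0 t)).1, hL.2.add (h0.prod (cconv_Icc 0 t)).2⟩
  have hmem : ∀ y s, (y, s) ∈ L + {(0 : W)} ×ˢ Set.Icc 0 t ↔ ∃ r, (y, r) ∈ L ∧ r ≤ s ∧ s ≤ r + t := by
    intro y s
    rw [Set.mem_add]
    constructor
    · rintro ⟨⟨a, r⟩, ha, ⟨b, r'⟩, ⟨hb, h1, h2⟩, heq⟩
      simp only [Set.mem_singleton_iff] at hb
      dsimp only at h1 h2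
      subst hb
      simp only [Prod.mk_add_mk, add_zero, Prod.mk.injEq] at heq
      obtain ⟨rfl, rfl⟩ := heq
      exact ⟨r, ha, by linarith, by linarith⟩
    · rintro ⟨r, h1, h2, h3⟩
      exact ⟨(y, r), h1, (0, s - r), ⟨rfl, by simpa using h2, by simpa [add_comm] using h3⟩, by simp⟩
  rw [hΦ.split hcyl hLt (p := p) (q := q + t), hΦ.split hcyl hL (p := p) (q := q + t) hp]
  · congr 1
    · rw [hΦ.cut (Dn_cconv hLt p) (p + t), ← hΦ.trans _ (Dn_cconv hL p) (0, t)]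
      have e1 : Dn p (L + {(0 : W)} ×ˢ Set.Icc 0 t) ∩ {x | x.2 ≤ p + t} =
          (Prod.fst '' L) ×ˢ Set.Icc p (p + t) := by
        ext ⟨y, s⟩
        simp only [Dn, Set.mem_inter_iff, Set.mem_ofPred_eq, hmem, Set.mem_prod, Set.mem_image,
          Prod.exists, exists_and_right, exists_eq_right, Set.mem_Icc]
        constructor
        · rintro ⟨⟨h1, r, h2, r', h3, h4⟩, h5⟩
          exact ⟨⟨r', h3⟩, h1, h5⟩
        · rintro ⟨⟨r', h3⟩, h1, h5⟩
          have := hp _ h3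
          dsimp only at this
          exact ⟨⟨h1, r' + t, by linarith, r', h3, by linarith, le_rfl⟩, h5⟩
      have e2 : Dn p (L + {(0 : W)} ×ˢ Set.Icc 0 t) ∩ {x | p + t ≤ x.2} =
          (fun y : W × ℝ => ((0 : W), t) + y) '' Dn p L := by
        ext ⟨y, s⟩
        simp only [Dn, Set.mem_inter_iff, Set.mem_ofPred_eq, hmem, Set.mem_image,
          Prod.exists, Prod.mk_add_mk, zero_add, Prod.mk.injEq]
        constructor
        · rintro ⟨⟨h1, r, h2, r', h3, h4, h6⟩, h5⟩
          exact ⟨y, s - t, ⟨by linarith, r', by linarith, h3⟩, rfl, by ring⟩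
        · rintro ⟨a, b, ⟨h1, r, h2, h3⟩, rfl, rfl⟩
          exact ⟨⟨by linarith, r + t, by linarith, r, h3, by linarith, le_rfl⟩, by linarith⟩
      rw [e1, e2, hcyl (Prod.fst '' L) (hL.image (ContinuousLinearMap.fst ℝ W ℝ)), zero_add]
    · congr 1
      ext ⟨y, s⟩
      simp only [Dn, Set.mem_ofPred_eq, Set.mem_neg, Prod.neg_mk, hmem]
      refine and_congr_right fun _ => ⟨?_, ?_⟩
      · rintro ⟨r, h1, r', h2, h3, h4⟩
        exact ⟨-r', by linarith, by simpa using h2⟩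
      · rintro ⟨r, h1, h2⟩
        exact ⟨r, h1, -r, h2, le_rfl, by linarith⟩
  · intro x hx; exact (hq x hx).trans (by linarith)
  · rintro ⟨y, s⟩ hx
    obtain ⟨r, h1, h2, h3⟩ := (hmem y s).1 hx
    exact (hp _ h1).trans h2
  · rintro ⟨y, s⟩ hx
    obtain ⟨r, h1, h2, h3⟩ := (hmem y s).1 hx
    have := hq _ h1
    dsimp only at this ⊢
    linarith

end

/-! ### From symmetric bodies to all bodies -/

section
variable {W : Type*} [NormedAddCommGroup W] [NormedSpace ℝ W]

/-- A body which fills the lower half of a centrally symmetric cylinder is annihilated: together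
with its reflection it covers the cylinder, and it meets its reflection in a symmetric set. -/
lemma Good.half_cyl {Φ : Set (W × ℝ) → ℂ} (hΦ : Good Φ)
    (hcyl : ∀ B : Set W, CConv B → ∀ c d : ℝ, Φ (B ×ˢ Set.Icc c d) = 0)
    (hsymm : ∀ S, CConv S → -S = S → Φ S = 0)
    {A : Set (W × ℝ)} (hA : CConv A) {B : Set W} (hB : CConv B) (hBs : -B = B) {p q : ℝ}
    (h1 : B ×ˢ Set.Icc p q ⊆ A) (h2 : A ⊆ B ×ˢ Set.Icc p (2 * q - p)) : Φ A = 0 := by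
  rw [← hΦ.trans A hA (0, -q)]
  set A' := (fun y : W × ℝ => ((0 : W), -q) + y) '' A with hA'
  have hAc : CConv A' := hA.trans _
  have hmem : ∀ y s, (y, s) ∈ A' ↔ (y, s + q) ∈ A := by
    intro y s
    simp only [hA', Set.mem_image, Prod.exists, Prod.mk_add_mk, zero_add, Prod.mk.injEq]
    constructor
    · rintro ⟨a, b, h, rfl, rfl⟩
      simpa using h
    · intro h
      exact ⟨y, s + q, h, rfl, by ring⟩
  have hBm : ∀ y, -y ∈ B ↔ y ∈ B := by
    intro y; rw [← Set.mem_neg, hBs]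
  have hu : A' ∪ -A' = B ×ˢ Set.Icc (p - q) (q - p) := by
    ext ⟨y, s⟩
    rw [Set.mem_union, Set.mem_neg, Prod.neg_mk, hmem, hmem]
    simp only [Set.mem_prod, Set.mem_Icc]
    constructor
    · rintro (h | h)
      · obtain ⟨h3, h4, h5⟩ := h2 h
        dsimp only at h3 h4 h5
        exact ⟨h3, by linarith, by linarith⟩
      · obtain ⟨h3, h4, h5⟩ := h2 h
        dsimp only at h3 h4 h5
        exact ⟨(hBm y).1 h3, by linarith, by linarith⟩
    · rintro ⟨h3, h4, h5⟩
      rcases le_total s 0 with h | h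
      · exact Or.inl (h1 ⟨h3, by dsimp only; linarith, by dsimp only; linarith⟩)
      · exact Or.inr (h1 ⟨(hBm y).2 h3, by dsimp only; linarith, by dsimp only; linarith⟩)
  have h3 := hΦ.val _ _ hAc hAc.neg (by rw [hu]; exact (hB.prod (cconv_Icc _ _)).1)
  rw [hu, hcyl B hB, hΦ.even _ hAc,
    hsymm _ (hAc.inter hAc.neg) (by rw [Set.inter_neg, neg_neg, Set.inter_comm]), add_zero,
    ← two_mul] at h3
  simpa using h3.symm

/-- The part above height `p` of the union of the downward cones of slope `M` with apices in `K`,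
over the ball of radius `R`. -/
def Cone (R M p : ℝ) (K : Set (W × ℝ)) : Set (W × ℝ) :=
  {x | ‖x.1‖ ≤ R ∧ p ≤ x.2 ∧ ∃ k ∈ K, x.2 + M * ‖x.1 - k.1‖ ≤ k.2}

lemma cone_cconv [FiniteDimensional ℝ W] {K : Set (W × ℝ)} (hK : CConv K) {M : ℝ} (hM : 0 ≤ M)
    (R p : ℝ) : CConv (Cone R M p K) := by
  constructor
  · rintro ⟨y, s⟩ ⟨h1, h2, ⟨k, r⟩, h3, h4⟩ ⟨y', s'⟩ ⟨h1', h2', ⟨k', r'⟩, h3', h4'⟩ a b ha hb hab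
    refine ⟨?_, ?_, _, hK.1 h3 h3' ha hb hab, ?_⟩
    · have := convex_closedBall (0 : W) R (mem_closedBall_zero_iff.2 h1)
        (mem_closedBall_zero_iff.2 h1') ha hb hab
      exact mem_closedBall_zero_iff.1 this
    · simp only [Prod.snd_add, Prod.smul_snd, smul_eq_mul] at *
      calc p = a * p + b * p := by rw [← add_mul, hab, one_mul]
        _ ≤ _ := by gcongr
    · simp only [Prod.snd_add, Prod.smul_snd, Prod.fst_add, Prod.smul_fst, smul_eq_mul] at *
      have e : a • y + b • y' - (a • k + b • k') = a • (y - k) + b • (y' - k') := by module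
      have h5 : ‖a • y + b • y' - (a • k + b • k')‖ ≤ a * ‖y - k‖ + b * ‖y' - k'‖ := by
        rw [e]
        refine (norm_add_le _ _).trans ?_
        rw [norm_smul, norm_smul, Real.norm_of_nonneg ha, Real.norm_of_nonneg hb]
      calc _ ≤ a * s + b * s' + M * (a * ‖y - k‖ + b * ‖y' - k'‖) := by gcongr
        _ = a * (s + M * ‖y - k‖) + b * (s' + M * ‖y' - k'‖) := by ring
        _ ≤ _ := by gcongr
  · obtain ⟨b, hb⟩ := (hK.2.image continuous_snd).bddAbove
    have hrep : Cone R M p K = Prod.fst '' (((Metric.closedBall (0 : W) R ×ˢ Set.Icc p b) ×ˢ K) ∩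
        {z : (W × ℝ) × (W × ℝ) | z.1.2 + M * ‖z.1.1 - z.2.1‖ ≤ z.2.2}) := by
      ext ⟨y, s⟩
      constructor
      · rintro ⟨h1, h2, k, h3, h4⟩
        refine ⟨((y, s), k), ⟨⟨⟨mem_closedBall_zero_iff.2 h1, h2, ?_⟩, h3⟩, h4⟩, rfl⟩
        have h5 : k.2 ≤ b := hb ⟨k, h3, rfl⟩
        have h6 : 0 ≤ M * ‖y - k.1‖ := by positivity
        dsimp only at *
        linarith
      · rintro ⟨⟨_, k⟩, ⟨⟨⟨h1, h2, h5⟩, h3⟩, h4⟩, rfl⟩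
        exact ⟨mem_closedBall_zero_iff.1 h1, h2, k, h3, h4⟩
    rw [hrep]
    have : ProperSpace W := FiniteDimensional.proper ℝ W
    exact ((((isCompact_closedBall 0 R).prod isCompact_Icc).prod hK.2).inter_right
      (isClosed_le (by fun_prop) (by fun_prop))).image continuous_fst

/-- If cylinders and symmetric bodies are annihilated, so is the region below any body: it is the
limit, as the slope tends to infinity, of the regions below finite-slope hulls of the body, and
these extend to bodies filling half of a cylinder. -/
lemma Good.dn_zero [FiniteDimensional ℝ W] {Φ : Set (W × ℝ) → ℂ} (hΦ : Good Φ)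
    (hcyl : ∀ B : Set W, CConv B → ∀ c d : ℝ, Φ (B ×ˢ Set.Icc c d) = 0)
    (hsymm : ∀ S, CConv S → -S = S → Φ S = 0)
    {K : Set (W × ℝ)} (hK : CConv K) {a : ℝ} (ha : ∀ x ∈ K, a ≤ x.2) : Φ (Dn a K) = 0 := by
  have : ProperSpace W := FiniteDimensional.proper ℝ W
  rcases K.eq_empty_or_nonempty with rfl | ⟨k₀, hk₀⟩
  · simp [Dn, hΦ.empty]
  obtain ⟨-, b, -, hb⟩ := exists_height_bounds hK
  obtain ⟨R, hR⟩ := hK.2.isBounded.exists_norm_le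
  have hR1 : ∀ x ∈ K, ‖x.1‖ ≤ R := fun x hx => (norm_fst_le x).trans (hR x hx)
  have hab : a ≤ b := (ha _ hk₀).trans (hb _ hk₀)
  have hR0 : 0 ≤ R := (norm_nonneg _).trans (hR1 _ hk₀)
  have hBall : CConv (Metric.closedBall (0 : W) R) :=
    ⟨convex_closedBall _ _, isCompact_closedBall _ _⟩
  have hBs : -Metric.closedBall (0 : W) R = Metric.closedBall (0 : W) R := by
    ext; simp
  have hcone : ∀ M : ℝ, 0 ≤ M → Φ (Cone R M a K) = 0 := by
    intro M hM
    set q := a - M * (2 * R) with hq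
    have hqa : q ≤ a := by
      have : 0 ≤ M * (2 * R) := by positivity
      linarith
    set p := 2 * q - b with hp
    have hA := cone_cconv hK hM R p
    have hAup : Cone R M p K ⊆ Metric.closedBall (0 : W) R ×ˢ Set.Icc p (2 * q - p) := by
      rintro ⟨y, s⟩ ⟨h1, h2, k, h3, h4⟩
      refine ⟨mem_closedBall_zero_iff.2 h1, h2, ?_⟩
      have h5 := hb k h3
      have h6 : 0 ≤ M * ‖y - k.1‖ := by positivity
      dsimp only at *
      linarith
    have hAlow : Metric.closedBall (0 : W) R ×ˢ Set.Icc p q ⊆ Cone R M p K := by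
      rintro ⟨y, s⟩ ⟨h1, h2, h3⟩
      have h1' := mem_closedBall_zero_iff.1 h1
      refine ⟨h1', h2, k₀, hk₀, ?_⟩
      have h5 := ha _ hk₀
      have h6 : M * ‖y - k₀.1‖ ≤ M * (2 * R) := by
        gcongr
        refine (norm_sub_le _ _).trans ?_
        have := hR1 _ hk₀
        dsimp only at h1'
        linarith
      dsimp only at *
      linarith
    have hZ := hΦ.half_cyl hcyl hsymm hA hBall hBs hAlow hAup
    have hA2 : CConv (Cone R M p K ∩ {x | x.2 ≤ a}) :=
      ⟨hA.1.inter (convex_halfSpace_le (LinearMap.snd ℝ W ℝ).isLinear a),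
        hA.2.inter_right (isClosed_le continuous_snd continuous_const)⟩
    have hZ2 := hΦ.half_cyl hcyl hsymm hA2 hBall hBs
      (fun x hx => ⟨hAlow hx, hx.2.2.trans hqa⟩) (Set.inter_subset_left.trans hAup)
    rw [hΦ.cut hA a, hZ2, zero_add] at hZ
    convert hZ using 2
    ext ⟨y, s⟩
    simp only [Cone, Set.mem_inter_iff, Set.mem_ofPred_eq]
    constructor
    · rintro ⟨h1, h2, h3⟩
      exact ⟨⟨h1, by linarith, h3⟩, h2⟩
    · rintro ⟨⟨h1, h2, h3⟩, h4⟩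
      exact ⟨h1, h4, h3⟩
  have hsub : ∀ M : ℝ, Dn a K ⊆ Cone R M a K := by
    rintro M ⟨y, s⟩ ⟨h1, r, h2, h3⟩
    have h4 := hR1 _ h3
    exact ⟨h4, h1, _, h3, by simpa using h2⟩
  have hne : (Dn a K).Nonempty := ⟨k₀, ha _ hk₀, k₀.2, le_rfl, hk₀⟩
  by_contra hcon
  obtain ⟨δ, hδ, h⟩ := hΦ.cont _ (Dn_cconv hK a) hne _ (norm_pos_iff.2 hcon)
  have hM0 : 0 ≤ (b - a) / δ := div_nonneg (by linarith) hδ.le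
  have h2 := h _ (cone_cconv hK (M := (b - a) / δ + 1) (by positivity) R a) (hne.mono (hsub _)) ?_ ?_
  · rw [hcone _ (by positivity), zero_sub, norm_neg] at h2
    exact lt_irrefl _ h2
  · rintro ⟨y, s⟩ ⟨h1, h2, ⟨k, r⟩, h3, h4⟩
    dsimp only at h1 h2 h4
    have h5 := hb _ h3
    dsimp only at h5
    have h6 : 0 ≤ ‖y - k‖ := norm_nonneg _
    refine ⟨(k, s), ⟨h2, r, ?_, h3⟩, ?_⟩
    · dsimp only
      nlinarith
    · rw [Prod.norm_def]
      simp only [Prod.mk_sub_mk, sub_self, norm_zero, sup_le_iff]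
      refine ⟨?_, hδ.le⟩
      have h7 : ((b - a) / δ + 1) * ‖y - k‖ ≤ b - a := by linarith
      have h8 : b - a = (b - a) / δ * δ := by field_simp
      by_contra h9
      push Not at h9
      nlinarith
  · intro x hx
    exact ⟨x, hsub _ hx, by simpa using hδ.le⟩

/-- A valuation which annihilates cylinders and symmetric bodies is zero: by `Good.split`, its values
are determined by those on the regions below bodies. -/
lemma Good.zero_of_symm [FiniteDimensional ℝ W] {Φ : Set (W × ℝ) → ℂ} (hΦ : Good Φ)
    (hcyl : ∀ B : Set W, CConv B → ∀ c d : ℝ, Φ (B ×ˢ Set.Icc c d) = 0)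
    (hsymm : ∀ S, CConv S → -S = S → Φ S = 0)
    {K : Set (W × ℝ)} (hK : CConv K) : Φ K = 0 := by
  obtain ⟨p, q, hp, hq⟩ := exists_height_bounds hK
  rw [hΦ.split hcyl hK hp hq, hΦ.dn_zero hcyl hsymm hK hp, hΦ.dn_zero hcyl hsymm hK.neg, zero_add]
  intro x hx
  have := hq _ hx
  simp only [Prod.snd_neg] at this
  linarith

end

/-! ### Induction on the dimension -/

section
variable {m : ℕ}

/-- The linear isomorphism from `ℝᵐ × ℝ` to `ℝᵐ⁺¹` which embeds `ℝᵐ` as the coordinate hyperplane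
`x i = 0` and sends the vertical unit vector to `u`. -/
noncomputable def shear (i : Fin (m + 1)) (u : Fin (m + 1) → ℝ) (hu : u i ≠ 0) :
    ((Fin m → ℝ) × ℝ) ≃L[ℝ] (Fin (m + 1) → ℝ) :=
  (LinearMap.linearEquivOfInjective
    ({ toFun := fun x => Fin.insertNth (α := fun _ => ℝ) i 0 x.1 + x.2 • u
       map_add' := fun x y => by
        rw [funext_iff, Fin.forall_iff_succAbove i]
        constructor
        · simp; ring
        · intro j; simp; ring
       map_smul' := fun c x => by
        rw [funext_iff, Fin.forall_iff_succAbove i]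
        constructor
        · simp; ring
        · intro j; simp; ring } : ((Fin m → ℝ) × ℝ) →ₗ[ℝ] (Fin (m + 1) → ℝ))
    (by
      rw [← LinearMap.ker_eq_bot, LinearMap.ker_eq_bot']
      rintro ⟨y, t⟩ h
      rw [funext_iff, Fin.forall_iff_succAbove i] at h
      obtain ⟨h1, h2⟩ := h
      have ht : t = 0 := by simpa [hu] using h1
      subst ht
      refine Prod.ext ?_ rfl
      ext j
      simpa using h2 j)
    (by simp)).toContinuousLinearEquiv

lemma shear_apply (i : Fin (m + 1)) (u : Fin (m + 1) → ℝ) (hu : u i ≠ 0) (x : (Fin m → ℝ) × ℝ) :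
    shear i u hu x = Fin.insertNth (α := fun _ => ℝ) i 0 x.1 + x.2 • u := rfl

/-- The segment from `0` to `u`. -/
def seg {E : Type*} [NormedAddCommGroup E] [NormedSpace ℝ E] (u : E) : Set E :=
  (fun t : ℝ => t • u) '' Set.Icc 0 1

lemma shear_vertical (i : Fin (m + 1)) (u : Fin (m + 1) → ℝ) (hu : u i ≠ 0) :
    shear i u hu '' ({0} ×ˢ Set.Icc 0 1) = seg u := by
  have h0 : Fin.insertNth (α := fun _ => ℝ) i 0 (0 : Fin m → ℝ) = 0 := by
    rw [funext_iff, Fin.forall_iff_succAbove i]; simp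
  ext x
  constructor
  · rintro ⟨⟨y, t⟩, ⟨hy, ht⟩, rfl⟩
    rw [Set.mem_singleton_iff] at hy
    refine ⟨t, ht, ?_⟩
    dsimp only at hy
    subst hy
    rw [shear_apply]
    simp only [h0, zero_add]
  · rintro ⟨t, ht, rfl⟩
    refine ⟨(0, t), ⟨rfl, ht⟩, ?_⟩
    rw [shear_apply]
    simp only [h0, zero_add]

/-- Adding a segment in a direction `u` transverse to a coordinate hyperplane does not change the
value, if cylinders in the direction `u` over that hyperplane are annihilated. -/
lemma Good.add_seg_of_shear {Φ : Set (Fin (m + 1) → ℝ) → ℂ} (hΦ : Good Φ)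
    (i : Fin (m + 1)) (u : Fin (m + 1) → ℝ) (hu : u i ≠ 0)
    (hcyl : ∀ B : Set (Fin m → ℝ), CConv B → ∀ c d : ℝ,
      Φ (shear i u hu '' (B ×ˢ Set.Icc c d)) = 0)
    {L : Set (Fin (m + 1) → ℝ)} (hL : CConv L) : Φ (L + seg u) = Φ L := by
  have h1 := (hΦ.comp_equiv (shear i u hu)).add_seg hcyl (hL.imageE (shear i u hu).symm)
    zero_le_one
  rw [Set.image_add, shear_vertical, Set.image_image] at h1
  simpa using h1

lemma symSeg_eq {E : Type*} [NormedAddCommGroup E] [NormedSpace ℝ E] (L : Set E) (v : E) :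
    L + (fun t : ℝ => t • v) '' Set.Icc (-1) 1 =
      (fun y => -v + y) '' (L + seg ((2 : ℝ) • v)) := by
  ext x
  simp only [Set.mem_image, Set.mem_add, seg]
  constructor
  · rintro ⟨l, hl, _, ⟨t, ht, rfl⟩, rfl⟩
    refine ⟨_, ⟨l, hl, _, ⟨(t + 1) / 2, ⟨by linarith [ht.1], by linarith [ht.2]⟩, rfl⟩, rfl⟩, ?_⟩
    module
  · rintro ⟨_, ⟨l, hl, _, ⟨t, ht, rfl⟩, rfl⟩, rfl⟩
    refine ⟨l, hl, _, ⟨2 * t - 1, ⟨by linarith [ht.1], by linarith [ht.2]⟩, rfl⟩, ?_⟩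
    module

lemma cconv_cube (n : ℕ) : CConv (Set.Icc (0 : Fin n → ℝ) 1) := ⟨convex_Icc 0 1, isCompact_Icc⟩

lemma seg_cconv {E : Type*} [NormedAddCommGroup E] [NormedSpace ℝ E] (u : E) : CConv (seg u) :=
  ⟨(convex_Icc (0 : ℝ) 1).linear_image ((LinearMap.id (R := ℝ) (M := ℝ)).smulRight u),
    isCompact_Icc.image (by fun_prop)⟩

lemma image_seg {E F : Type*} [NormedAddCommGroup E] [NormedSpace ℝ E] [NormedAddCommGroup F]
    [NormedSpace ℝ F] (e : E ≃L[ℝ] F) (u : E) : e '' seg u = seg (e u) := by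
  rw [seg, seg, Set.image_image]
  simp

/-- An even simple valuation on `ℝⁿ` which vanishes on the unit cube vanishes identically. -/
theorem Good.zero_of_cube (n : ℕ) : ∀ Φ : Set (Fin n → ℝ) → ℂ, Good Φ → Φ (Set.Icc 0 1) = 0 →
    ∀ K, CConv K → Φ K = 0 := by
  induction n with
  | zero =>
    intro Φ hΦ h0 K hK
    rcases K.eq_empty_or_nonempty with rfl | hne
    · exact hΦ.empty
    · rw [Subsingleton.eq_univ_of_nonempty hne, ← h0]
      congr 1
      exact (Subsingleton.eq_univ_of_nonempty ⟨0, by simp⟩).symm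
  | succ m ih =>
    intro Φ hΦ h0
    have hcyl : ∀ (i : Fin (m + 1)) (u : Fin (m + 1) → ℝ) (hu : u i ≠ 0),
        Φ (shear i u hu '' (Set.Icc 0 1 ×ˢ Set.Icc 0 1)) = 0 →
        ∀ B : Set (Fin m → ℝ), CConv B → ∀ c d : ℝ,
          Φ (shear i u hu '' (B ×ˢ Set.Icc c d)) = 0 := by
      intro i u hu h B hB c d
      have hg := hΦ.comp_equiv (shear i u hu)
      exact hg.cyl_zero hB (ih _ hg.cyl h B hB) c d
    have hsing : ∀ i : Fin (m + 1), (Pi.single i 1 : Fin (m + 1) → ℝ) i ≠ 0 := by simp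
    have hcoord : ∀ i : Fin (m + 1), Φ (shear i (Pi.single i 1) (hsing i) ''
        (Set.Icc 0 1 ×ˢ Set.Icc 0 1)) = 0 := by
      intro i
      rw [← h0]
      congr 1
      ext x
      constructor
      · rintro ⟨⟨y, t⟩, ⟨hy, ht⟩, rfl⟩
        rw [shear_apply]
        simp only [Set.mem_Icc, Pi.le_def] at hy ⊢
        rw [Fin.forall_iff_succAbove i, Fin.forall_iff_succAbove i]
        simpa [Fin.succAbove_ne] using ⟨⟨ht.1, hy.1⟩, ⟨ht.2, hy.2⟩⟩
      · intro hx
        refine ⟨(fun j => x (i.succAbove j), x i), ⟨⟨fun j => hx.1 _, fun j => hx.2 _⟩,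
          hx.1 _, hx.2 _⟩, ?_⟩
        rw [shear_apply, funext_iff, Fin.forall_iff_succAbove i]
        simp [Fin.succAbove_ne]
    have hcyl0 := fun i => hcyl i _ _ (hcoord i)
    have hg0 := hΦ.comp_equiv (shear 0 _ (hsing (0 : Fin (m + 1))))
    suffices hmain : ∀ K, CConv K →
        Φ (shear 0 _ (hsing (0 : Fin (m + 1))) '' K) = 0 by
      intro K hK
      have := hmain _ (hK.imageE (shear 0 _ (hsing (0 : Fin (m + 1)))).symm)
      rw [Set.image_image] at this
      simpa using this
    rcases Nat.eq_zero_or_pos m with rfl | hm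
    · -- on the line every body is a cylinder
      intro K hK
      have hs : CConv (Prod.snd '' K) := hK.image (ContinuousLinearMap.snd ℝ (Fin 0 → ℝ) ℝ)
      have hKs : K = Set.univ ×ˢ (Prod.snd '' K) := by
        ext ⟨y, t⟩
        simp only [Set.mem_prod, Set.mem_univ, true_and, Set.mem_image, Prod.exists,
          exists_eq_right]
        constructor
        · intro h; exact ⟨y, h⟩
        · rintro ⟨z, h⟩; rwa [Subsingleton.elim y z]
      rcases K.eq_empty_or_nonempty with rfl | hne
      · simp [hΦ.empty]
      · rw [hKs, eq_Icc_of_connected_compact ⟨hne.image _, hs.1.isPreconnected⟩ hs.2]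
        refine hcyl0 0 _ ⟨convex_univ, ?_⟩ _ _
        exact Set.finite_univ.isCompact
    · have hgen : ∀ (u : Fin (m + 1) → ℝ), ∀ L, CConv L → Φ (L + seg u) = Φ L := by
        intro u L hL
        by_cases hu0 : u = 0
        · subst hu0
          congr 1
          ext x
          simp only [seg, smul_zero, Set.mem_add]
          constructor
          · rintro ⟨l, hl, _, ⟨t, ht, rfl⟩, rfl⟩
            simpa using hl
          · intro hx
            exact ⟨x, hx, 0, ⟨0, by simp, rfl⟩, by simp⟩
        obtain ⟨i, hu⟩ : ∃ i, u i ≠ 0 := by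
          by_contra hcon
          push Not at hcon
          exact hu0 (funext hcon)
        refine hΦ.add_seg_of_shear i u hu (hcyl i u hu ?_) hL
        -- the sheared cube is a facet plus an edge parallel to a coordinate axis
        let j : Fin m := ⟨0, hm⟩
        have hfac : CConv ((Set.Icc (0 : Fin m → ℝ) 1 ∩ {y | y j = 0}) ×ˢ Set.Icc (0 : ℝ) 1) := by
          refine CConv.prod ⟨(convex_Icc _ _).inter ?_, isCompact_Icc.inter_right ?_⟩ (cconv_Icc 0 1)
          · exact convex_hyperplane (LinearMap.proj (R := ℝ) (φ := fun _ => ℝ) j).isLinear 0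
          · exact isClosed_eq (continuous_apply j) continuous_const
        have hset : shear i u hu '' (Set.Icc 0 1 ×ˢ Set.Icc 0 1) =
            shear i u hu '' ((Set.Icc (0 : Fin m → ℝ) 1 ∩ {y | y j = 0}) ×ˢ Set.Icc (0 : ℝ) 1) +
              seg (Pi.single (i.succAbove j) 1) := by
          have hins : ∀ t : ℝ, shear i u hu (Pi.single j t, 0) =
              t • (Pi.single (i.succAbove j) 1 : Fin (m + 1) → ℝ) := by
            intro t
            rw [shear_apply, funext_iff, Fin.forall_iff_succAbove i]
            constructor
            · simp [(Fin.succAbove_ne i j).symm]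
            · intro k
              by_cases hk : k = j
              · subst hk; simp
              · simp [hk]
          ext x
          constructor
          · rintro ⟨⟨y, t⟩, ⟨hy, ht⟩, rfl⟩
            refine ⟨_, ⟨(Function.update y j 0, t), ⟨⟨⟨?_, ?_⟩, by simp⟩, ht⟩, rfl⟩, _,
              ⟨y j, ⟨hy.1 j, hy.2 j⟩, rfl⟩, ?_⟩
            · intro k
              by_cases hk : k = j
              · subst hk; simp
              · simpa [hk] using hy.1 k
            · intro k
              by_cases hk : k = j
              · subst hk; simp
              · simpa [hk] using hy.2 k
            · dsimp only
              rw [← hins, ← map_add]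
              congr 1
              refine Prod.ext ?_ (by simp)
              ext k
              by_cases hk : k = j
              · subst hk; simp
              · simp [hk]
          · rintro ⟨_, ⟨⟨y, t⟩, ⟨⟨hy, hyj⟩, ht⟩, rfl⟩, _, ⟨r, hr, rfl⟩, rfl⟩
            refine ⟨(y + Pi.single j r, t), ⟨⟨?_, ?_⟩, ht⟩, ?_⟩
            · intro k
              by_cases hk : k = j
              · subst hk
                have : y j = 0 := hyj
                simpa [this] using hr.1
              · simpa [hk] using hy.1 k
            · intro k
              by_cases hk : k = j
              · subst hk
                have : y j = 0 := hyj
                simpa [this] using hr.2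
              · simpa [hk] using hy.2 k
            · dsimp only
              rw [← hins, ← map_add]
              congr 1
              refine Prod.ext ?_ (by simp)
              rfl
        rw [hset, hΦ.add_seg_of_shear _ _ _ (hcyl0 (i.succAbove j)) (hfac.imageE _)]
        refine (hΦ.comp_equiv (shear i u hu)).simple _ hfac
          ((LinearMap.proj (R := ℝ) (φ := fun _ => ℝ) j) ∘ₗ LinearMap.fst ℝ _ ℝ) ?_ 0 ?_
        · intro h
          have := LinearMap.congr_fun h (Pi.single j 1, 0)
          simp at this
        · rintro ⟨y, t⟩ ⟨⟨_, h⟩, _⟩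
          exact h
      have hsymm : ∀ S, CConv S → -S = S → Φ S = 0 := by
        intro S hS hSs
        rcases S.eq_empty_or_nonempty with rfl | hne
        · exact hΦ.empty
        let e := EuclideanSpace.equiv (Fin (m + 1)) ℝ
        have hgE := hΦ.comp_equiv e
        have h1 := hgE.symm_eq (S := e.symm '' S) (fun L hL v => by
            have hsc : CConv (seg ((2 : ℝ) • v)) := seg_cconv _
            rw [symSeg, symSeg_eq, hgE.trans _ (hL.add hsc) (-v), Set.image_add, image_seg]
            exact hgen _ _ (hL.imageE e)) (hS.imageE _) (hne.image _) ?_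
        · rw [Set.image_image] at h1
          simp only [ContinuousLinearEquiv.apply_symm_apply, Set.image_id'] at h1
          rw [h1]
          refine hgE.simple _ (body_cconv Sublin.zero')
            ((LinearMap.proj (R := ℝ) (φ := fun _ => ℝ) 0) ∘ₗ e.toLinearEquiv.toLinearMap) ?_ 0 ?_
          · intro h
            have := LinearMap.congr_fun h (e.symm (Pi.single 0 1))
            simp at this
          · intro y hy
            have h2 : inner ℝ y y ≤ 0 := hy y
            rw [real_inner_self_nonpos] at h2
            rw [h2, map_zero]
        · rw [← Set.image_neg, hSs]
      refine fun K hK => hg0.zero_of_symm (hcyl0 0) (fun S hS hSs => ?_) hK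
      refine hsymm _ (hS.imageE _) ?_
      rw [← Set.image_neg, hSs]
end

/-! ### Haar measure as a valuation -/

section
variable {E : Type*} [NormedAddCommGroup E] [NormedSpace ℝ E]

/-- If `A` lies in the `t r`-neighbourhood of `B` and contains a ball of radius `r` about `p`, then
shrinking `A` towards `p` by the factor `1 - t` moves it into `B`. -/
lemma homothety_subset {A B : Set E} (hA : CConv A) (hB : CConv B) {p : E} {r t : ℝ} (hr : 0 < r)
    (ht : 0 < t) (ht1 : t < 1) (hball : Metric.closedBall p r ⊆ A)
    (hAB : ∀ a ∈ A, ∃ b ∈ B, ‖a - b‖ ≤ t * r) :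
    AffineMap.homothety p (1 - t) '' A ⊆ B := by
  rintro _ ⟨a, ha, rfl⟩
  set z := AffineMap.homothety p (1 - t) a with hz
  have hz' : z = (1 - t) • a + t • p := by
    rw [hz, AffineMap.homothety_apply, vsub_eq_sub, vadd_eq_add]; module
  by_contra hcon
  obtain ⟨f, u, hf1, hf2⟩ := geometric_hahn_banach_closed_point hB.1 hB.2.isClosed hcon
  obtain ⟨v, hv1, hv2⟩ := f.exists_lt_apply_of_lt_opNorm
    (r := ‖f‖ - (f z - u) / (t * r)) (by
      have : 0 < (f z - u) / (t * r) := div_pos (by linarith) (by positivity)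
      linarith)
  have key : ∀ v : E, ‖v‖ < 1 → ‖f‖ - (f z - u) / (t * r) < f v → False := by
    intro v hv1 hv2
    have hw : (1 - t) • a + t • (p + r • v) ∈ A := by
      refine hA.1 ha (hball ?_) (by linarith) ht.le (by ring)
      rw [mem_closedBall_iff_norm, add_sub_cancel_left, norm_smul, Real.norm_of_nonneg hr.le]
      nlinarith
    obtain ⟨b, hb, hwb⟩ := hAB _ hw
    have h1 := hf1 b hb
    have h2 : f ((1 - t) • a + t • (p + r • v)) = f z + t * r * f v := by
      rw [hz']; simp; ring
    have h3 : f ((1 - t) • a + t • (p + r • v)) - f b ≤ ‖f‖ * (t * r) := by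
      rw [← map_sub]
      exact (le_abs_self _).trans ((f.le_opNorm _).trans (by gcongr))
    have h4 : t * r * (‖f‖ - (f z - u) / (t * r)) < t * r * f v := by gcongr
    have h5 : t * r * (‖f‖ - (f z - u) / (t * r)) = t * r * ‖f‖ - (f z - u) := by
      field_simp
    linarith
  rcases le_total 0 (f v) with h | h
  · rw [Real.norm_of_nonneg h] at hv2
    exact key v hv1 hv2
  · rw [Real.norm_of_nonpos h] at hv2
    exact key (-v) (by rwa [norm_neg]) (by rwa [map_neg])

/-- Haar measure is an even simple valuation; continuity is the only point that is not formal. -/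
lemma good_measure [FiniteDimensional ℝ E] [MeasurableSpace E] [BorelSpace E] (μ : Measure E)
    [μ.IsAddHaarMeasure] : Good (fun A : Set E => ((μ A).toReal : ℂ)) where
  empty := by simp
  val A B hA hB _ := by
    have h := measure_union_add_inter (μ := μ) A hB.2.measurableSet
    have h2 := congrArg ENNReal.toReal h
    rw [ENNReal.toReal_add (hA.2.union hB.2).measure_lt_top.ne (hA.inter hB).2.measure_lt_top.ne,
      ENNReal.toReal_add hA.2.measure_lt_top.ne hB.2.measure_lt_top.ne] at h2
    exact_mod_cast h2
  trans A hA x := by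
    rw [Set.image_add_left, measure_preimage_add]
  even A hA := by rw [Measure.measure_neg]
  simple A hA f hf c hc := by
    rcases A.eq_empty_or_nonempty with rfl | ⟨a, ha⟩
    · simp
    have h1 : μ A = 0 := by
      rw [← measure_preimage_add μ a A]
      refine measure_mono_null (t := (LinearMap.ker f : Set E)) ?_
        (Measure.addHaar_submodule μ _ (by rwa [Ne, LinearMap.ker_eq_top]))
      intro x hx
      have h2 := hc _ hx
      rw [map_add, hc a ha] at h2
      simpa using h2
    simp [h1]
  cont A hA hne ε hε := by
    have hproper : ProperSpace E := FiniteDimensional.proper ℝ E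
    -- upper semicontinuity
    have hup : ∃ δ : ℝ, 0 < δ ∧ (μ (Metric.cthickening δ A)).toReal < (μ A).toReal + ε := by
      have h1 := (ENNReal.tendsto_toReal hA.2.measure_lt_top.ne).comp
        (tendsto_measure_cthickening_of_isCompact (μ := μ) hA.2)
      have h2 := h1.eventually (gt_mem_nhds (show (μ A).toReal < (μ A).toReal + ε by linarith))
      obtain ⟨δ, hδ, h3⟩ := Metric.eventually_nhds_iff.1 h2
      refine ⟨δ / 2, by positivity, h3 ?_⟩
      rw [Real.dist_eq, sub_zero, abs_of_pos (by positivity)]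
      linarith
    -- lower semicontinuity
    have hlow : ∃ δ : ℝ, 0 < δ ∧ ∀ B, CConv B → (∀ a ∈ A, ∃ b ∈ B, ‖a - b‖ ≤ δ) →
        (μ A).toReal - ε < (μ B).toReal := by
      rcases (interior A).eq_empty_or_nonempty with hinteg | ⟨p, hp⟩
      · refine ⟨1, one_pos, fun B _ _ => ?_⟩
        have h1 : μ A = 0 := by
          rw [← hA.1.addHaar_frontier μ, frontier, hinteg, hA.2.isClosed.closure_eq]
          simp
        rw [h1]
        have : 0 ≤ (μ B).toReal := ENNReal.toReal_nonneg
        simp only [ENNReal.toReal_zero]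
        linarith
      · obtain ⟨r, hr, hball⟩ := Metric.nhds_basis_closedBall.mem_iff.1 (mem_interior_iff_mem_nhds.1 hp)
        have h1 : Tendsto (fun t : ℝ => (1 - t) ^ Module.finrank ℝ E * (μ A).toReal) (𝓝 0)
            (𝓝 ((1 - 0) ^ Module.finrank ℝ E * (μ A).toReal)) :=
          Continuous.tendsto (by fun_prop) 0
        have h2 := h1.eventually (lt_mem_nhds (show (μ A).toReal - ε < _ by simpa using hε))
        obtain ⟨t₀, ht₀, h3⟩ := Metric.eventually_nhds_iff.1 h2
        set t := min (t₀ / 2) (1 / 2) with ht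
        have htpos : 0 < t := lt_min (by positivity) (by norm_num)
        have ht1 : t < 1 := (min_le_right _ _).trans_lt (by norm_num)
        have htt : t < t₀ := (min_le_left _ _).trans_lt (by linarith)
        have h4 := @h3 t (by rw [Real.dist_eq, sub_zero, abs_of_pos htpos]; exact htt)
        refine ⟨t * r, by positivity, fun B hB hAB => h4.trans_le ?_⟩
        have h5 := measure_mono (μ := μ) (homothety_subset hA hB hr htpos ht1 hball hAB)
        rw [Measure.addHaar_image_homothety] at h5
        have h6 := ENNReal.toReal_mono hB.2.measure_lt_top.ne h5
        rw [ENNReal.toReal_mul, ENNReal.toReal_ofReal (abs_nonneg _),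
          abs_of_nonneg (pow_nonneg (by linarith) _)] at h6
        exact h6
    obtain ⟨δ₁, hδ₁, hup⟩ := hup
    obtain ⟨δ₂, hδ₂, hlow⟩ := hlow
    refine ⟨min δ₁ δ₂, lt_min hδ₁ hδ₂, fun B hB hBne h1 h2 => ?_⟩
    have h3 := hlow B hB fun a ha => by
      obtain ⟨b, hb, hab⟩ := h2 a ha
      exact ⟨b, hb, hab.trans (min_le_right _ _)⟩
    have h4 : (μ B).toReal ≤ (μ (Metric.cthickening δ₁ A)).toReal := by
      refine ENNReal.toReal_mono hA.2.isBounded.cthickening.measure_lt_top.ne (measure_mono ?_)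
      intro b hb
      obtain ⟨a, ha, hab⟩ := h1 b hb
      refine Metric.mem_cthickening_of_dist_le b a δ₁ A ha ?_
      rw [dist_eq_norm]
      exact hab.trans (min_le_left _ _)
    rw [← Complex.ofReal_sub, Complex.norm_real, Real.norm_eq_abs, abs_lt]
    constructor <;> linarith

lemma Good.sub_smul {Φ Ψ : Set E → ℂ} (hΦ : Good Φ) (hΨ : Good Ψ) (c : ℂ) :
    Good (fun A => Φ A - c * Ψ A) where
  empty := by simp [hΦ.empty, hΨ.empty]
  val A B hA hB h := by
    linear_combination hΦ.val A B hA hB h - c * hΨ.val A B hA hB h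
  trans A hA x := by rw [hΦ.trans A hA, hΨ.trans A hA]
  even A hA := by rw [hΦ.even A hA, hΨ.even A hA]
  simple A hA f hf k hk := by rw [hΦ.simple A hA f hf k hk, hΨ.simple A hA f hf k hk]; simp
  cont A hA hne ε hε := by
    obtain ⟨δ₁, h₁, H₁⟩ := hΦ.cont A hA hne (ε / 2) (by positivity)
    obtain ⟨δ₂, h₂, H₂⟩ := hΨ.cont A hA hne (ε / 2 / (‖c‖ + 1)) (by positivity)
    refine ⟨min δ₁ δ₂, lt_min h₁ h₂, fun B hB hBne h1 h2 => ?_⟩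
    have a1 := H₁ B hB hBne
      (fun b hb => by obtain ⟨a, ha, h⟩ := h1 b hb; exact ⟨a, ha, h.trans (min_le_left _ _)⟩)
      (fun b hb => by obtain ⟨a, ha, h⟩ := h2 b hb; exact ⟨a, ha, h.trans (min_le_left _ _)⟩)
    have a2 := H₂ B hB hBne
      (fun b hb => by obtain ⟨a, ha, h⟩ := h1 b hb; exact ⟨a, ha, h.trans (min_le_right _ _)⟩)
      (fun b hb => by obtain ⟨a, ha, h⟩ := h2 b hb; exact ⟨a, ha, h.trans (min_le_right _ _)⟩)
    have e : Φ B - c * Ψ B - (Φ A - c * Ψ A) = (Φ B - Φ A) - c * (Ψ B - Ψ A) := by ring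
    rw [e]
    refine (norm_sub_le _ _).trans_lt ?_
    rw [norm_mul]
    have hc : 0 < ‖c‖ + 1 := by positivity
    rw [lt_div_iff₀ hc] at a2
    have h3 : ‖c‖ * ‖Ψ B - Ψ A‖ ≤ ‖Ψ B - Ψ A‖ * (‖c‖ + 1) := by
      nlinarith [norm_nonneg (Ψ B - Ψ A)]
    linarith

end

/-! ### Extending a valuation on convex bodies by zero -/

section
variable {V : Type*} [NormedAddCommGroup V] [NormedSpace ℝ V]

open Classical in
/-- The extension of a function on convex bodies to all sets, by zero. -/
noncomputable def zeroExtend (φ : ConvexBody V → ℂ) (A : Set V) : ℂ :=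
  if h : CConv A ∧ A.Nonempty then φ ⟨A, h.1.1, h.1.2, h.2⟩ else 0

lemma zeroExtend_eq (φ : ConvexBody V → ℂ) {A : Set V} (hA : CConv A) (hne : A.Nonempty) :
    zeroExtend φ A = φ ⟨A, hA.1, hA.2, hne⟩ := dif_pos ⟨hA, hne⟩

lemma zeroExtend_empty (φ : ConvexBody V → ℂ) : zeroExtend φ ∅ = 0 := dif_neg (by simp)

/-- The hypotheses of the theorem in the form of `Good`. A set contained in a hyperplane has a
lower-dimensional affine span. -/
lemma good_extend [FiniteDimensional ℝ V] {φ : ConvexBody V → ℂ} (hφ : MemVal φ)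
    (heven : ∀ K : ConvexBody V, φ (ConvexBody.negBody K) = φ K)
    (hsimple : ∀ K : ConvexBody V,
      Module.finrank ℝ (affineSpan ℝ (K : Set V)).direction < Module.finrank ℝ V → φ K = 0) :
    Good (zeroExtend φ) where
  empty := zeroExtend_empty φ
  val A B hA hB hAB := by
    rcases A.eq_empty_or_nonempty with rfl | hAne
    · simp [zeroExtend_empty]
    rcases B.eq_empty_or_nonempty with rfl | hBne
    · simp [zeroExtend_empty]
    -- a convex union is connected, so that the two bodies meet
    have hne : (A ∩ B).Nonempty := by
      have h := isPreconnected_closed_iff.1 hAB.isPreconnected A B hA.2.isClosed hB.2.isClosed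
        subset_rfl
        (by rwa [Set.union_inter_cancel_left]) (by rwa [Set.union_inter_cancel_right])
      exact h.mono Set.inter_subset_right
    rw [zeroExtend_eq φ hA hAne, zeroExtend_eq φ hB hBne, zeroExtend_eq φ (hA.inter hB) hne,
      zeroExtend_eq φ (A := A ∪ B) ⟨hAB, hA.2.union hB.2⟩ (hAne.mono Set.subset_union_left)]
    rw [hφ.1 ⟨A, hA.1, hA.2, hAne⟩ ⟨B, hB.1, hB.2, hBne⟩ _
      ⟨A ∩ B, (hA.inter hB).1, (hA.inter hB).2, hne⟩ rfl rfl]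
    ring
  trans A hA x := by
    rcases A.eq_empty_or_nonempty with rfl | hne
    · simp [zeroExtend_empty]
    rw [zeroExtend_eq φ hA hne, zeroExtend_eq φ (hA.trans x) (hne.image _), ← hφ.2.1 ⟨A, hA.1, hA.2, hne⟩ x]
    congr 1
    apply SetLike.coe_injective
    rw [ConvexBody.coe_add]
    change _ = A + {x}
    rw [Set.add_singleton]
    change (fun y => x + y) '' A = _
    simp_rw [add_comm]
  even A hA := by
    rcases A.eq_empty_or_nonempty with rfl | hne
    · simp
    rw [zeroExtend_eq φ hA hne, zeroExtend_eq φ hA.neg hne.neg]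
    exact heven ⟨A, hA.1, hA.2, hne⟩
  simple A hA f hf c hc := by
    rcases A.eq_empty_or_nonempty with rfl | hne
    · exact zeroExtend_empty φ
    rw [zeroExtend_eq φ hA hne]
    apply hsimple
    have hle : (affineSpan ℝ A).direction ≤ LinearMap.ker f := by
      rw [direction_affineSpan, vectorSpan, Submodule.span_le]
      rintro _ ⟨x, hx, y, hy, rfl⟩
      simp [hc x hx, hc y hy]
    refine (Submodule.finrank_mono hle).trans_lt (Submodule.finrank_lt ?_)
    rwa [Ne, LinearMap.ker_eq_top]
  cont A hA hne ε hε := by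
    obtain ⟨δ, hδ, h⟩ := Metric.continuous_iff.1 hφ.2.2 ⟨A, hA.1, hA.2, hne⟩ ε hε
    refine ⟨δ / 2, by positivity, fun B hB hBne h1 h2 => ?_⟩
    rw [zeroExtend_eq φ hA hne, zeroExtend_eq φ hB hBne, ← dist_eq_norm]
    apply h
    rw [← ConvexBody.hausdorffDist_coe]
    refine (Metric.hausdorffDist_le_of_mem_dist (r := δ / 2) (by positivity) ?_ ?_).trans_lt
      (by linarith)
    · intro b hb
      obtain ⟨a, ha, hab⟩ := h1 b hb
      exact ⟨a, ha, by rwa [dist_eq_norm]⟩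
    · intro b hb
      obtain ⟨a, ha, hab⟩ := h2 b hb
      exact ⟨a, ha, by rwa [dist_eq_norm]⟩

end

end

/-- **Klain's theorem.** Every even simple translation invariant continuous valuation on a
finite-dimensional real vector space is proportional to the Lebesgue measure. -/
theorem klain_simple_even {V : Type*} [NormedAddCommGroup V] [NormedSpace ℝ V]
    [FiniteDimensional ℝ V] [MeasurableSpace V] [BorelSpace V]
    (μ : Measure V) [μ.IsAddHaarMeasure]
    (φ : ConvexBody V → ℂ) (hφ : MemVal φ)
    (heven : ∀ K : ConvexBody V, φ (ConvexBody.negBody K) = φ K)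
    (hsimple : ∀ K : ConvexBody V,
      Module.finrank ℝ (affineSpan ℝ (K : Set V)).direction < Module.finrank ℝ V → φ K = 0) :
    ∃ c : ℂ, ∀ K : ConvexBody V, φ K = c * ((μ (K : Set V)).toReal : ℂ) := by
  let e : (Fin (Module.finrank ℝ V) → ℝ) ≃L[ℝ] V :=
    ContinuousLinearEquiv.ofFinrankEq (by simp)
  set Q : Set V := e '' Set.Icc 0 1 with hQ
  have hQpos : 0 < μ Q := by
    have hinteg : (interior Q).Nonempty := by
      have h1 : (interior (Set.Icc (0 : Fin (Module.finrank ℝ V) → ℝ) 1)).Nonempty := by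
        rw [← Set.pi_univ_Icc, interior_pi_set Set.finite_univ]
        simp only [interior_Icc]
        exact ⟨fun _ => 1 / 2, fun i _ => by norm_num⟩
      have h2 := h1.image e
      rwa [← e.coe_toHomeomorph, Homeomorph.image_interior] at h2
    exact Measure.measure_pos_of_nonempty_interior μ hinteg
  have hQfin : μ Q ≠ ⊤ := ((cconv_cube _).imageE e).2.measure_lt_top.ne
  have hQne : ((μ Q).toReal : ℂ) ≠ 0 := by
    exact_mod_cast (ENNReal.toReal_pos hQpos.ne' hQfin).ne'
  refine ⟨zeroExtend φ Q / ((μ Q).toReal : ℂ), fun K => ?_⟩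
  have hgood := ((good_extend hφ heven hsimple).sub_smul (good_measure μ)
    (zeroExtend φ Q / ((μ Q).toReal : ℂ))).comp_equiv e
  have hK : CConv (K : Set V) := ⟨K.convex, K.isCompact⟩
  have h1 := Good.zero_of_cube _ _ hgood (by
    rw [← hQ, div_mul_cancel₀ _ hQne, sub_self]) _ (hK.imageE e.symm)
  rw [Set.image_image] at h1
  simp only [ContinuousLinearEquiv.apply_symm_apply, Set.image_id'] at h1
  rw [zeroExtend_eq φ hK K.nonempty] at h1
  exact sub_eq_zero.1 h1
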